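/- arXiv:2603.10288 — 10 statements merged into one kernel-verified Lean document; each statement's English description precedes it below -/
import Mathlib

section
/- Method 3.1 (version-robust minimality criterion). Let ℰ = (𝒳, Σ, {P_θ}_{θ∈Θ}) be a statistical model and μ a σ-finite measure on (𝒳,Σ) with P_θ ≪ μ for every θ ∈ Θ. Suppose (𝒳,Σ) is an analytic Borel space, (𝒯,Σ_𝒯) is a separable measurable space, T : 𝒳 → 𝒯 is measurable, and for each θ ∈ Θ, f_θ : 𝒳 → ℝ is a density (Radon–Nikodym derivative) of P_θ with respect to μ. If T is sufficient and there exists a nonempty countable subset Θ₀ ⊆ Θ such that for all x, y ∈ 𝒳 with y ∈ D(x,Θ₀) one has T(x) = T(y), then T is minimal sufficient. -/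
open MeasureTheory

noncomputable section

universe u v w u'

/-- `f` is a (pointwise nonnegative, measurable) density of `P` w.r.t. `μ`,
i.e. a version of the Radon–Nikodym derivative `dP/dμ`. -/
def IsDensity {X : Type*} [MeasurableSpace X] (P μ : Measure X) (f : X → ℝ) : Prop :=
  Measurable f ∧ (∀ x, 0 ≤ f x) ∧ P = μ.withDensity (fun x => ENNReal.ofReal (f x))

/-- The proportionality set `D(x, Θ')` determined by a family of densities. -/
def DSet {X : Type*} {Θ : Type*} (f : Θ → X → ℝ) (x : X) (Θ' : Set Θ) : Set X :=
  {y | ∃ h : ℝ, 0 < h ∧ ∀ θ ∈ Θ', f θ y = f θ x * h}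

/-- A statistic `T` is sufficient for the model `{P θ}`. -/
def IsSufficientStat {X : Type u} [mX : MeasurableSpace X] {Θ : Type v}
    (P : Θ → Measure X) {T' : Type w} [mT : MeasurableSpace T'] (T : X → T') : Prop :=
  Measurable T ∧
  ∀ E : Set X, MeasurableSet E → ∃ κ : T' → ℝ, Measurable κ ∧
    ∀ θ : Θ, (P θ)[E.indicator (fun _ => (1 : ℝ)) | MeasurableSpace.comap T mT] =ᵐ[P θ] κ ∘ T

/-- A statistic `T` is minimal sufficient: it is sufficient and it factors
`P θ`-a.e. (for every `θ`) through every sufficient statistic via a measurable map. -/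
def IsMinimalSufficientStat {X : Type u} [mX : MeasurableSpace X] {Θ : Type v}
    (P : Θ → Measure X) {T' : Type w} [mT : MeasurableSpace T'] (T : X → T') : Prop :=
  IsSufficientStat P T ∧
  ∀ (S' : Type u') (mS : MeasurableSpace S') (S : X → S'),
    @IsSufficientStat X mX Θ P S' mS S →
      ∃ g : S' → T', @Measurable S' T' mS mT g ∧ ∀ θ : Θ, T =ᵐ[P θ] g ∘ S

/-- A measurable space is analytic Borel iff it is separable (countably generated with
measurable singletons) and it is the image of a standard Borel space under a surjective
measurable map. -/
def IsAnalyticBorel (X : Type u) [mX : MeasurableSpace X] : Prop :=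
  MeasurableSpace.CountablyGenerated X ∧ MeasurableSingletonClass X ∧
  ∃ (Y : Type u) (mY : MeasurableSpace Y), @StandardBorelSpace Y mY ∧
    ∃ g : Y → X, @Measurable Y X mY mX g ∧ Function.Surjective g

/-- A sub-σ-algebra `m ⊆ Σ` is sufficient for the model `{P θ}`. -/
def IsSufficientSubalgebra {X : Type u} [mX : MeasurableSpace X] {Θ : Type v}
    (P : Θ → Measure X) (m : MeasurableSpace X) : Prop :=
  m ≤ mX ∧ ∀ E : Set X, MeasurableSet[mX] E → ∃ κ : X → ℝ, Measurable[m] κ ∧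
    ∀ θ : Θ, (P θ)[E.indicator (fun _ => (1 : ℝ)) | m] =ᵐ[P θ] κ

/-- The collection `𝔑_ℰ` of measurable sets null under every `P θ`. -/
def modelNullSets {X : Type u} [mX : MeasurableSpace X] {Θ : Type v}
    (P : Θ → Measure X) : Set (Set X) :=
  {N | MeasurableSet N ∧ ∀ θ, P θ N = 0}

/-- The σ-algebra `𝔄̄^ℰ` generated by `𝔄 ∪ 𝔑_ℰ`. -/
def completionAlg {X : Type u} [mX : MeasurableSpace X] {Θ : Type v}
    (P : Θ → Measure X) (m : MeasurableSpace X) : MeasurableSpace X :=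
  MeasurableSpace.generateFrom ({s | MeasurableSet[m] s} ∪ @modelNullSets X mX Θ P)

/-- A sub-σ-algebra is minimal sufficient iff it is sufficient and contained in the
`𝔑_ℰ`-completion of every sufficient sub-σ-algebra. -/
def IsMinimalSufficientSubalgebra {X : Type u} [mX : MeasurableSpace X] {Θ : Type v}
    (P : Θ → Measure X) (m : MeasurableSpace X) : Prop :=
  @IsSufficientSubalgebra X mX Θ P m ∧
  ∀ m' : MeasurableSpace X, @IsSufficientSubalgebra X mX Θ P m' →
    m ≤ @completionAlg X mX Θ P m'

/-- The total variation distance `d_ℰ(θ₁, θ₂) = sup_{E ∈ Σ} |P θ₁ E - P θ₂ E|`. -/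
def tvDist {X : Type u} [MeasurableSpace X] {Θ : Type v} (P : Θ → Measure X)
    (θ₁ θ₂ : Θ) : ℝ :=
  ⨆ E : {E : Set X // MeasurableSet E}, |(P θ₁ E.1).toReal - (P θ₂ E.1).toReal|

/-- The coarsest topology `τ⟨ℰ⟩` on `Θ` making `θ ↦ P θ E` continuous for every `E ∈ Σ`. -/
def modelTopology {X : Type u} [MeasurableSpace X] {Θ : Type v} (P : Θ → Measure X) :
    TopologicalSpace Θ :=
  ⨅ E : {E : Set X // MeasurableSet E},
    TopologicalSpace.induced (fun θ => (P θ E.1).toReal) inferInstance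

section Helpers
open Set

lemma cap {Z : Type*} [TopologicalSpace Z] [PolishSpace Z] [MeasurableSpace Z] [BorelSpace Z]
    (ν : Measure Z) [IsFiniteMeasure ν] (f : (ℕ → ℕ) → Z) (hf : Continuous f) (c : ENNReal)
    (hc : c < ν (range f)) : ∃ K ⊆ range f, IsCompact K ∧ c ≤ ν K := by
  have step : ∀ (L : Set (ℕ → ℕ)) (k : ℕ), ∃ m : ℕ,
      c < ν (f '' L) → c < ν (f '' (L ∩ {x | x k ≤ m})) := by
    intro L k
    by_cases h : c < ν (f '' L)
    · have hU : f '' L = ⋃ m : ℕ, f '' (L ∩ {x | x k ≤ m}) := by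
        rw [← image_iUnion, ← inter_iUnion]
        congr 1
        ext x
        simp only [mem_inter_iff, mem_iUnion, mem_ofPred_eq]
        exact ⟨fun h => ⟨h, _, le_rfl⟩, fun h => h.1⟩
      have hm : Monotone (fun m : ℕ => f '' (L ∩ {x | x k ≤ m})) := by
        intro a b hab
        apply image_mono
        rintro x ⟨h1, h2⟩
        exact ⟨h1, le_trans h2 hab⟩
      rw [hU, hm.measure_iUnion, lt_iSup_iff] at h
      obtain ⟨m, hm⟩ := h
      exact ⟨m, fun _ => hm⟩
    · exact ⟨0, fun h' => absurd h' h⟩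
  choose m hm using step
  let L : ℕ → Set (ℕ → ℕ) := fun k => Nat.rec univ (fun k L => L ∩ {x | x k ≤ m L k}) k
  have hL0 : L 0 = univ := rfl
  have hLs : ∀ k, L (k+1) = L k ∩ {x | x k ≤ m (L k) k} := fun k => rfl
  let n : ℕ → ℕ := fun k => m (L k) k
  have hLc : ∀ k, c < ν (f '' L k) := by
    intro k
    induction k with
    | zero => rw [hL0, image_univ]; exact hc
    | succ k ih => rw [hLs]; exact hm _ _ ih
  have hLmem : ∀ k x, x ∈ L k ↔ ∀ i < k, x i ≤ n i := by
    intro k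
    induction k with
    | zero => intro x; simp [hL0]
    | succ k ih =>
      intro x
      rw [hLs, mem_inter_iff, ih]
      constructor
      · rintro ⟨h1, h2⟩ i hi
        rcases Nat.lt_succ_iff_lt_or_eq.1 hi with h | rfl
        · exact h1 i h
        · exact h2
      · intro h
        exact ⟨fun i hi => h i (by omega), h k (by omega)⟩
  let K : Set (ℕ → ℕ) := Set.pi univ (fun i => Iic (n i))
  have hK : IsCompact K := isCompact_univ_pi fun i => (finite_Iic (n i)).isCompact
  have key : ∀ V : Set (ℕ → ℕ), IsOpen V → K ⊆ V → ∃ k, L k ⊆ V := by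
    intro V hV hKV
    by_contra! hcon
    have : ∀ k, ∃ x, x ∈ L k ∧ x ∉ V := fun k => not_subset.1 (hcon k)
    choose x hxL hxV using this
    let y : ℕ → ℕ → ℕ := fun k i => min (x k i) (n i)
    have hyK : ∀ k, y k ∈ K := fun k i _ => mem_Iic.2 (min_le_right _ _)
    obtain ⟨a, ha, φ, hφ, hlim⟩ := hK.tendsto_subseq hyK
    have hx : Filter.Tendsto (x ∘ φ) Filter.atTop (nhds a) := by
      rw [tendsto_pi_nhds] at hlim ⊢
      intro i
      refine (hlim i).congr' ?_
      filter_upwards [Filter.eventually_gt_atTop i] with k hk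
      have : i < φ k := lt_of_lt_of_le hk (hφ.id_le k)
      exact min_eq_left ((hLmem _ _).1 (hxL (φ k)) i this)
    obtain ⟨k, hk⟩ := (hx.eventually (hV.mem_nhds (hKV ha))).exists
    exact hxV _ hk
  refine ⟨f '' K, image_subset_range _ _, hK.image hf, ?_⟩
  let _ := TopologicalSpace.upgradeIsCompletelyMetrizable Z
  rw [Set.measure_eq_iInf_isOpen]
  refine le_iInf fun U => le_iInf fun hU => le_iInf fun hUo => ?_
  obtain ⟨k, hk⟩ := key (f ⁻¹' U) (hUo.preimage hf) (image_subset_iff.1 hU)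
  exact (hLc k).le.trans (measure_mono (image_subset_iff.2 hk))

lemma analytic_inner {Z : Type*} [TopologicalSpace Z] [PolishSpace Z] [MeasurableSpace Z]
    [BorelSpace Z] (ν : Measure Z) [IsFiniteMeasure ν] (I : Set Z) (hI : AnalyticSet I) :
    ∃ B ⊆ I, MeasurableSet B ∧ ν (I \ B) = 0 := by
  rw [AnalyticSet_def] at hI
  rcases hI with rfl | ⟨f, hf, rfl⟩
  · exact ⟨∅, subset_rfl, .empty, by simp⟩
  by_cases h0 : ν (range f) = 0
  · exact ⟨∅, empty_subset _, .empty, by simpa using h0⟩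
  obtain ⟨u, -, hu, hlim⟩ := exists_seq_strictMono_tendsto' (pos_iff_ne_zero.2 h0)
  choose K hKs hKc hKν using fun n => cap ν f hf (u n) (hu n).2
  have hB : MeasurableSet (⋃ n, K n) := .iUnion fun n => (hKc n).measurableSet
  refine ⟨⋃ n, K n, iUnion_subset hKs, hB, ?_⟩
  rw [measure_sdiff (iUnion_subset hKs) hB.nullMeasurableSet (measure_ne_top _ _)]
  apply tsub_eq_zero_of_le
  exact le_of_tendsto' hlim fun n => (hKν n).trans (measure_mono (subset_iUnion K n))

lemma factor {X Y Z T' : Type*} [MeasurableSpace X] [MeasurableSpace Y] [StandardBorelSpace Y]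
    [MeasurableSpace Z] [StandardBorelSpace Z] [MeasurableSpace T']
    [MeasurableSpace.CountablyGenerated T'] [MeasurableSingletonClass T'] [Nonempty X]
    (γ : Y → X) (hγ : Measurable γ) (hγs : Function.Surjective γ)
    (lam : Measure X) [IsFiniteMeasure lam] (N : Set X) (hN : MeasurableSet N) (hN0 : lam N = 0)
    (F : X → Z) (hF : Measurable F) (T : X → T') (hT : Measurable T)
    (h : ∀ x y, x ∉ N → y ∉ N → F x = F y → T x = T y) :
    ∃ h : Z → T', Measurable h ∧ ∀ᵐ x ∂lam, T x = h (F x) := by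
  classical
  let _ := upgradeStandardBorel Y
  let _ := upgradeStandardBorel Z
  have han : ∀ A : Set X, MeasurableSet A → AnalyticSet (F '' A) := by
    intro A hA
    have : F '' A = (F ∘ γ) '' (γ ⁻¹' A) := by
      rw [image_comp, image_preimage_eq _ hγs]
    rw [this]
    exact (hγ hA).analyticSet_image (hF.comp hγ)
  let b := MeasurableSpace.natGeneratingSequence T'
  have hb : ∀ n, MeasurableSet (b n) := MeasurableSpace.measurableSet_natGeneratingSequence
  have hsep : ∀ n, ∃ U : Set Z, MeasurableSet U ∧ ∀ x ∉ N, (F x ∈ U ↔ T x ∈ b n) := by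
    intro n
    obtain ⟨U, h1, h2, h3⟩ := (han (T ⁻¹' b n ∩ Nᶜ) ((hT (hb n)).inter hN.compl)).measurablySeparable
      (han (T ⁻¹' (b n)ᶜ ∩ Nᶜ) ((hT (hb n).compl).inter hN.compl)) (by
        rw [Set.disjoint_left]
        rintro z ⟨x, hx, rfl⟩ ⟨y, hy, hxy⟩
        have := h x y hx.2 hy.2 hxy.symm
        have h1 : T x ∈ b n := hx.1
        have h2 : T y ∉ b n := hy.1
        exact h2 (this ▸ h1))
    refine ⟨U, h3, fun x hx => ⟨fun hU => ?_, fun hTx => h1 ⟨x, ⟨hTx, hx⟩, rfl⟩⟩⟩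
    by_contra hTx
    exact Set.disjoint_left.1 h2 ⟨x, ⟨hTx, hx⟩, rfl⟩ hU
  choose U hUm hU using hsep
  obtain ⟨B, hBI, hBm, hB0⟩ := analytic_inner (lam.map F) (F '' Nᶜ) (han _ hN.compl)
  have : ∀ z, ∃ x, z ∈ B → x ∉ N ∧ F x = z := by
    intro z
    by_cases hz : z ∈ B
    · obtain ⟨x, hx, hxz⟩ := hBI hz
      exact ⟨x, fun _ => ⟨hx, hxz⟩⟩
    · exact ⟨Classical.arbitrary X, fun h => absurd h hz⟩
  choose s hs using this
  let x0 : X := Classical.arbitrary X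
  refine ⟨fun z => if z ∈ B then T (s z) else T x0, ?_, ?_⟩
  · refine Measurable.mono (measurable_generateFrom ?_) le_rfl
      (MeasurableSpace.generateFrom_natGeneratingSequence T').ge
    rintro _ ⟨n, rfl⟩
    have : (fun z => if z ∈ B then T (s z) else T x0) ⁻¹' (b n) =
        (B ∩ U n) ∪ (Bᶜ ∩ {_z | T x0 ∈ b n}) := by
      ext z
      simp only [mem_preimage, mem_union, mem_inter_iff, mem_compl_iff, mem_ofPred_eq]
      by_cases hz : z ∈ B
      · have h1 := hU n (s z) (hs z hz).1
        rw [(hs z hz).2] at h1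
        simp [hz, h1]
      · simp [hz]
    change MeasurableSet ((fun z => if z ∈ B then T (s z) else T x0) ⁻¹' (b n))
    rw [this]
    exact (hBm.inter (hUm n)).union (hBm.compl.inter (.const _))
  · have h1 : ∀ᵐ x ∂lam, x ∉ N := measure_eq_zero_iff_ae_notMem.1 hN0
    have h2 : ∀ᵐ x ∂lam, F x ∉ F '' Nᶜ \ B :=
      ae_of_ae_map hF.aemeasurable (measure_eq_zero_iff_ae_notMem.1 hB0)
    filter_upwards [h1, h2] with x hx1 hx2
    have hB : F x ∈ B := by
      by_contra hcon
      exact hx2 ⟨⟨x, hx1, rfl⟩, hcon⟩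
    rw [if_pos hB]
    exact h _ _ hx1 (hs _ hB).1 (hs _ hB).2.symm

lemma count_sup {X Θ : Type*} [MeasurableSpace X] [Nonempty Θ] (μ : Measure X)
    [SigmaFinite μ] (A : Θ → Set X) (hA : ∀ θ, MeasurableSet (A θ)) :
    ∃ c : ℕ → Θ, ∀ θ, μ (A θ \ ⋃ n, A (c n)) = 0 := by
  let ν := μ.toFinite
  obtain ⟨u, -, hu, hm⟩ := exists_seq_tendsto_sSup
    (S := range fun c : ℕ → Θ => ν (⋃ n, A (c n))) (range_nonempty _) (OrderTop.bddAbove _)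
  choose c hc using hm
  refine ⟨fun n => c n.unpair.1 n.unpair.2, fun θ => ?_⟩
  set W := ⋃ n : ℕ, A (c n.unpair.1 n.unpair.2) with hW
  have hWm : MeasurableSet W := .iUnion fun n => hA _
  have h1 : sSup (range fun c : ℕ → Θ => ν (⋃ n, A (c n))) ≤ ν W := by
    refine le_of_tendsto' hu fun n => ?_
    rw [← hc n]
    refine measure_mono (iUnion_subset fun k => ?_)
    refine subset_trans ?_ (subset_iUnion _ (Nat.pair n k))
    simp
  have h2 : ν (A θ ∪ W) ≤ ν W := by
    refine le_trans (le_trans ?_ (le_sSup (mem_range_self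
      (fun n : ℕ => Nat.casesOn n θ fun n => c n.unpair.1 n.unpair.2)))) h1
    refine measure_mono (union_subset ?_ (iUnion_subset fun k => ?_))
    · exact subset_iUnion_of_subset 0 subset_rfl
    · exact subset_iUnion_of_subset (k+1) subset_rfl
  apply absolutelyContinuous_toFinite μ
  have : A θ \ W = (A θ ∪ W) \ W := by simp
  rw [this, measure_sdiff subset_union_right hWm.nullMeasurableSet (measure_ne_top _ _)]
  exact tsub_eq_zero_of_le h2

lemma suff_lintegral {X S' : Type*} [mX : MeasurableSpace X] [mS : MeasurableSpace S']
    (Q : Measure X) [IsProbabilityMeasure Q] (S : X → S') (hS : Measurable S) (E : Set X)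
    (hE : MeasurableSet E) (κ : S' → ℝ)
    (h : Q[E.indicator (fun _ => (1 : ℝ)) | MeasurableSpace.comap S mS] =ᵐ[Q] κ ∘ S)
    (B : Set S') (hB : MeasurableSet B) :
    Q (E ∩ S ⁻¹' B) = ∫⁻ x in S ⁻¹' B, ENNReal.ofReal (κ (S x)) ∂Q := by
  have hint : Integrable (E.indicator (fun _ => (1 : ℝ))) Q :=
    (integrable_const 1).indicator hE
  have h1 := setIntegral_condExp hS.comap_le hint (s := S ⁻¹' B) ⟨B, hB, rfl⟩
  have h2 : Integrable (κ ∘ S) Q := integrable_condExp.congr h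
  have h3 : 0 ≤ᵐ[Q] κ ∘ S := by
    have : 0 ≤ᵐ[Q] Q[E.indicator (fun _ => (1 : ℝ)) | MeasurableSpace.comap S mS] :=
      condExp_nonneg (ae_of_all _ fun x => indicator_nonneg (fun _ _ => zero_le_one) x)
    filter_upwards [this, h] with x hx hx'
    rwa [← hx']
  rw [setIntegral_congr_ae (hS hB) (h.mono fun x hx _ => hx)] at h1
  have h4 := ofReal_integral_eq_lintegral_ofReal (h2.restrict (s := S ⁻¹' B))
    (ae_restrict_of_ae h3)
  simp only [Function.comp_apply] at h4 h1
  rw [← h4, h1, integral_indicator hE, setIntegral_const, smul_eq_mul, mul_one,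
    Measure.real, Measure.restrict_apply hE,
    ENNReal.ofReal_toReal (measure_ne_top _ _)]

lemma halmos_savage {X S' Θ : Type*} [mX : MeasurableSpace X] [mS : MeasurableSpace S']
    (P : Θ → Measure X) [∀ θ, IsProbabilityMeasure (P θ)] (S : X → S') (hS : Measurable S)
    (hsuff : ∀ E : Set X, MeasurableSet E → ∃ κ : S' → ℝ, Measurable κ ∧
      ∀ θ : Θ, (P θ)[E.indicator (fun _ => (1 : ℝ)) | MeasurableSpace.comap S mS] =ᵐ[P θ] κ ∘ S)
    (c : ℕ → Θ) (w : ℕ → ENNReal) (lam : Measure X) [IsFiniteMeasure lam]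
    (hlam : lam = Measure.sum fun n => w n • P (c n)) (θ : Θ) (hθ : P θ ≪ lam) :
    ∃ g : S' → ENNReal, Measurable g ∧ P θ = lam.withDensity (g ∘ S) := by
  let g := ((P θ).map S).rnDeriv (lam.map S)
  have hg : Measurable g := Measure.measurable_rnDeriv _ _
  have hgd : (lam.map S).withDensity g = (P θ).map S :=
    Measure.withDensity_rnDeriv_eq _ _ (hθ.map hS)
  refine ⟨g, hg, ?_⟩
  ext E hE
  obtain ⟨κ, hκ, hκP⟩ := hsuff E hE
  have hk : Measurable fun s => ENNReal.ofReal (κ s) := hκ.ennreal_ofReal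
  have h1 := fun θ B hB => suff_lintegral (P θ) S hS E hE κ (hκP θ) B hB
  have h2 : (lam.restrict E).map S = (lam.map S).withDensity fun s => ENNReal.ofReal (κ s) := by
    ext B hB
    rw [Measure.map_apply hS hB, Measure.restrict_apply (hS hB), withDensity_apply _ hB,
      setLIntegral_map hB hk hS, inter_comm, hlam,
      Measure.sum_apply _ (hE.inter (hS hB)), Measure.restrict_sum _ (hS hB),
      lintegral_sum_measure]
    congr 1
    ext n
    rw [Measure.restrict_smul, lintegral_smul_measure, Measure.smul_apply, h1 _ B hB]
  have h3 := h1 θ univ .univ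
  rw [preimage_univ, inter_univ, Measure.restrict_univ, ← lintegral_map hk hS, ← hgd,
    lintegral_withDensity_eq_lintegral_mul _ hg hk] at h3
  rw [h3, withDensity_apply _ hE, mul_comm, ← lintegral_withDensity_eq_lintegral_mul _ hk hg,
    ← h2, lintegral_map hg hS]
  rfl

end Helpers

/-- Method 3.1 (version-robust minimality criterion). -/
theorem method_3_1
    {X : Type u} [mX : MeasurableSpace X] {Θ : Type v} [Nonempty Θ]
    (P : Θ → Measure X) (hP : ∀ θ, IsProbabilityMeasure (P θ))
    (μ : Measure X) (hμ : SigmaFinite μ) (hac : ∀ θ, P θ ≪ μ)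
    (hX : IsAnalyticBorel X)
    {T' : Type w} [mT : MeasurableSpace T']
    (hTcg : MeasurableSpace.CountablyGenerated T')
    (hTsing : MeasurableSingletonClass T')
    (T : X → T') (hT : Measurable T)
    (f : Θ → X → ℝ) (hf : ∀ θ, IsDensity (P θ) μ (f θ))
    (hsuff : IsSufficientStat P T)
    (Θ₀ : Set Θ) (hne : Θ₀.Nonempty) (hcount : Θ₀.Countable)
    (hD : ∀ x y : X, y ∈ DSet f x Θ₀ → T x = T y) :
    IsMinimalSufficientStat P T := by
  classical
  refine ⟨hsuff, fun S' mS S hS => ?_⟩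
  obtain ⟨hSm, hSs⟩ := hS
  obtain ⟨-, -, Y, mY, hY, γ, hγ, hγs⟩ := hX
  have hfm : ∀ θ, Measurable fun x => ENNReal.ofReal (f θ x) := fun θ => (hf θ).1.ennreal_ofReal
  have hfP : ∀ θ, P θ = μ.withDensity fun x => ENNReal.ofReal (f θ x) := fun θ => (hf θ).2.2
  have hXne : Nonempty X := by
    obtain ⟨θ, -⟩ := hne
    exact (P θ).nonempty_of_neZero
  have : Countable Θ₀ := hcount
  -- a countable dominating subfamily
  obtain ⟨c, hc⟩ := count_sup μ (fun θ => {x | ENNReal.ofReal (f θ x) ≠ 0})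
    (fun θ => hfm θ (measurableSet_singleton 0).compl)
  let w : ℕ → ENNReal := fun n => 2⁻¹ ^ (n + 1)
  have hw : ∀ n, w n ≠ 0 := fun n => pow_ne_zero _ (by simp)
  obtain ⟨lam, hlam⟩ : ∃ lam, lam = Measure.sum fun n => w n • P (c n) := ⟨_, rfl⟩
  have hfin : IsFiniteMeasure lam := by
    constructor
    rw [hlam, Measure.sum_apply _ .univ]
    simp [w, ENNReal.tsum_geometric_add_one, ENNReal.mul_lt_top_iff]
  have hdom : ∀ θ, P θ ≪ lam := by
    intro θ
    refine Measure.AbsolutelyContinuous.mk fun B hB hB0 => ?_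
    rw [hlam, Measure.sum_apply _ hB, ENNReal.tsum_eq_zero] at hB0
    rw [hfP θ, withDensity_apply_eq_zero (hfm θ)]
    have h1 : ∀ n, μ ({x | ENNReal.ofReal (f (c n) x) ≠ 0} ∩ B) = 0 := by
      intro n
      have := hB0 n
      rw [Measure.smul_apply, smul_eq_mul, mul_eq_zero, or_iff_right (hw n), hfP (c n),
        withDensity_apply_eq_zero (hfm _)] at this
      exact this
    refine measure_mono_null ?_ (measure_union_null (hc θ) (measure_iUnion_null h1))
    rintro x ⟨hx, hxB⟩
    by_cases hx' : ∃ n, x ∈ {x | ENNReal.ofReal (f (c n) x) ≠ 0}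
    · obtain ⟨n, hn⟩ := hx'
      exact Or.inr (Set.mem_iUnion.2 ⟨n, hn, hxB⟩)
    · exact Or.inl ⟨hx, fun h => hx' (Set.mem_iUnion.1 h)⟩
  -- density of lam
  let p : X → ENNReal := ∑' n, w n • fun x => ENNReal.ofReal (f (c n) x)
  have hpm : Measurable p := by
    have : p = fun x => ∑' n, w n * ENNReal.ofReal (f (c n) x) := by
      ext x
      simp only [p, ENNReal.tsum_apply, Pi.smul_apply, smul_eq_mul]
    rw [this]
    exact Measurable.ennreal_tsum fun n => (hfm _).const_mul _
  have hp : lam = μ.withDensity p := by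
    rw [hlam, withDensity_tsum fun n => (hfm (c n)).const_smul (w n)]
    congr 1
    ext1 n
    rw [withDensity_smul _ (hfm _), ← hfP]
  have hlμ : lam ≪ μ := hp ▸ withDensity_absolutelyContinuous _ _
  choose g hg hgP using fun θ => halmos_savage P S hSm hSs c w lam hlam θ (hdom θ)
  have hae : ∀ θ, ∀ᵐ x ∂lam, ENNReal.ofReal (f θ x) = p x * g θ (S x) := by
    intro θ
    apply hlμ.ae_le
    have h1 : μ.withDensity (fun x => ENNReal.ofReal (f θ x)) = μ.withDensity (p * (g θ ∘ S)) := by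
      rw [withDensity_mul _ hpm ((hg θ).comp hSm), ← hp, ← hgP, ← hfP]
    exact (withDensity_eq_iff_of_sigmaFinite (hfm θ).aemeasurable
      (hpm.mul ((hg θ).comp hSm)).aemeasurable).1 h1
  have hptop : ∀ᵐ x ∂lam, p x < ⊤ := by
    apply hlμ.ae_le
    refine ae_lt_top hpm ?_
    rw [← setLIntegral_univ, ← withDensity_apply _ .univ, ← hp]
    exact measure_ne_top _ _
  have hp0 : ∀ᵐ x ∂lam, p x ≠ 0 := by
    rw [hp, ae_withDensity_iff hpm]
    exact ae_of_all _ fun x h => h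
  have hall : ∀ᵐ x ∂lam, (∀ θ : Θ₀, ENNReal.ofReal (f θ x) = p x * g θ (S x)) ∧
      p x < ⊤ ∧ p x ≠ 0 := (ae_all_iff.2 fun θ : Θ₀ => hae θ).and (hptop.and hp0)
  obtain ⟨N, hNsub, hN, hN0⟩ := exists_measurable_superset_of_null (ae_iff.1 hall)
  have hgood : ∀ x ∉ N, (∀ θ : Θ₀, ENNReal.ofReal (f θ x) = p x * g θ (S x)) ∧
      p x < ⊤ ∧ p x ≠ 0 := by
    intro x hx
    by_contra hcon
    exact hx (hNsub hcon)
  let G : S' → (Θ₀ → ENNReal) := fun s θ => g θ s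
  have hG : Measurable G := measurable_pi_lambda _ fun θ => hg θ
  obtain ⟨h, hhm, hh⟩ := factor γ hγ hγs lam N hN hN0 (G ∘ S) (hG.comp hSm) T hT (by
    intro x y hx hy hxy
    obtain ⟨hx1, hx2, hx3⟩ := hgood x hx
    obtain ⟨hy1, hy2, hy3⟩ := hgood y hy
    refine hD x y ⟨(p y).toReal / (p x).toReal, ?_, fun θ hθ => ?_⟩
    · exact div_pos (ENNReal.toReal_pos hy3 hy2.ne) (ENNReal.toReal_pos hx3 hx2.ne)
    · have h1 := congrArg ENNReal.toReal (hx1 ⟨θ, hθ⟩)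
      have h2 := congrArg ENNReal.toReal (hy1 ⟨θ, hθ⟩)
      have h3 : g θ (S x) = g θ (S y) := congrFun hxy ⟨θ, hθ⟩
      rw [ENNReal.toReal_ofReal ((hf θ).2.1 _), ENNReal.toReal_mul] at h1 h2
      have h4 := (ENNReal.toReal_pos hx3 hx2.ne).ne'
      rw [h1, h2, h3]
      field_simp)
  exact ⟨h ∘ G, hhm.comp hG, fun θ => (hdom θ).ae_le hh⟩
end
end

section
/- Method 3.3 (exponential families). Let ℰ = (𝒳, Σ, {P_θ}_{θ∈Θ}) be a statistical model and μ a σ-finite measure on (𝒳,Σ) with P_θ ≪ μ for every θ. Suppose (𝒳,Σ) is an analytic Borel space and for each θ, f_θ : 𝒳 → ℝ is a density of P_θ with respect to μ. Suppose there exist functions η₁,…,η_k, B : Θ → ℝ and measurable functions T₁,…,T_k, h : 𝒳 → ℝ such that for each θ ∈ Θ, f_θ(x) = exp[(Σ_{i=1}^k η_i(θ)·T_i(x)) − B(θ)]·h(x) for μ-a.e. x. If for any real numbers a₀, a₁, …, a_k satisfying Σ_{i=1}^k a_i·η_i(θ) = a₀ for every θ ∈ Θ one necessarily has a_i = 0 for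 every i ∈ {0,1,…,k}, then the statistic T : 𝒳 → ℝ^k given by T(x) := (T₁(x),…,T_k(x)) is minimal sufficient. -/
open MeasureTheory

noncomputable section

universe u v w u'

open MeasureTheory

open MeasureTheory

section Helpers

variable {X : Type*}

lemma aux_integral_wd [mX : MeasurableSpace X] (P : Measure X) (r : X → ℝ) (hr : Measurable r) (hr0 : ∀ x, 0 ≤ r x)
    (g : X → ℝ) (s : Set X) (hs : MeasurableSet s) :
    ∫ x in s, g x ∂(P.withDensity (fun x => ENNReal.ofReal (r x))) = ∫ x in s, r x * g x ∂P := by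
  rw [setIntegral_withDensity_eq_setIntegral_toReal_smul hr.ennreal_ofReal
    (by filter_upwards with x using ENNReal.ofReal_lt_top) g hs]
  refine integral_congr_ae ?_
  filter_upwards with x
  simp [ENNReal.toReal_ofReal (hr0 x)]

lemma aux_integrable [mX : MeasurableSpace X] (P : Measure X) (r : X → ℝ) (hr : Measurable r) (hr0 : ∀ x, 0 ≤ r x)
    [IsProbabilityMeasure (P.withDensity (fun x => ENNReal.ofReal (r x)))] : Integrable r P := by
  refine ⟨hr.aestronglyMeasurable, ?_⟩
  rw [hasFiniteIntegral_iff_ofReal (by filter_upwards with x using hr0 x)]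
  have := measure_univ (μ := P.withDensity (fun x => ENNReal.ofReal (r x)))
  rw [withDensity_apply _ MeasurableSet.univ, Measure.restrict_univ] at this
  rw [this]; exact ENNReal.one_lt_top

lemma aux_ind_int [mX : MeasurableSpace X] (P : Measure X) [IsProbabilityMeasure P] {E : Set X} (hE : MeasurableSet E) :
    Integrable (E.indicator (fun _ => (1 : ℝ))) P :=
  (integrable_const (1 : ℝ)).indicator hE

lemma aux_bdd (m : MeasurableSpace X) [mX : MeasurableSpace X] (P : Measure X) [IsProbabilityMeasure P]
    (E : Set X) :
    ∀ᵐ x ∂P, ‖(P[E.indicator (fun _ => (1 : ℝ)) | m]) x‖ ≤ 1 := by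
  have := ae_bdd_condExp_of_ae_bdd (m := m) (μ := P) (R := 1) (f := E.indicator (fun _ => (1 : ℝ)))
    (by
      filter_upwards with x
      by_cases hx : x ∈ E <;> simp [hx])
  simpa using this

lemma aux_suff (m : MeasurableSpace X) [mX : MeasurableSpace X] (P : Measure X) [IsProbabilityMeasure P] (r : X → ℝ) (hr : Measurable r)
    (hr0 : ∀ x, 0 ≤ r x) (Q : Measure X) [IsProbabilityMeasure Q]
    (hQ : Q = P.withDensity (fun x => ENNReal.ofReal (r x)))
    (hm : m ≤ mX) (hrm : StronglyMeasurable[m] r)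
    (E : Set X) (hE : MeasurableSet[mX] E) :
    Q[E.indicator (fun _ => (1 : ℝ)) | m] =ᵐ[Q] P[E.indicator (fun _ => (1 : ℝ)) | m] := by
  have hQP : Q ≪ P := by rw [hQ]; exact withDensity_absolutelyContinuous _ _
  have hri : Integrable r P := by
    subst hQ; exact aux_integrable P r hr hr0
  have hrE : Integrable (r * E.indicator (fun _ => (1 : ℝ))) P := by
    have := hri.indicator hE
    refine this.congr ?_
    filter_upwards with x
    by_cases hx : x ∈ E <;> simp [hx]
  have hpull := condExp_mul_of_stronglyMeasurable_left hrm hrE (aux_ind_int P hE)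
  symm
  refine ae_eq_condExp_of_forall_setIntegral_eq hm (aux_ind_int Q hE) ?_ ?_ ?_
  · intro s hs _
    refine Integrable.integrableOn ?_
    refine Integrable.of_bound (C := 1)
      (stronglyMeasurable_condExp.mono hm).aestronglyMeasurable ?_
    exact hQP.ae_le (aux_bdd m P E)
  · intro s hs _
    rw [hQ, aux_integral_wd P r hr hr0 _ s (hm s hs), aux_integral_wd P r hr hr0 _ s (hm s hs)]
    refine Eq.trans ?_ (setIntegral_condExp hm hrE hs)
    refine integral_congr_ae (ae_restrict_of_ae ?_)
    filter_upwards [hpull] with x hx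
    exact hx.symm
  · exact stronglyMeasurable_condExp.aestronglyMeasurable

lemma aux_min (m : MeasurableSpace X) [mX : MeasurableSpace X] (P : Measure X) [IsProbabilityMeasure P] (r : X → ℝ) (hr : Measurable r)
    (hr0 : ∀ x, 0 ≤ r x) (Q : Measure X) [IsProbabilityMeasure Q]
    (hQ : Q = P.withDensity (fun x => ENNReal.ofReal (r x)))
    (hm : m ≤ mX)
    (hS : ∀ E : Set X, MeasurableSet[mX] E →
      Q[E.indicator (fun _ => (1 : ℝ)) | m] =ᵐ[Q] P[E.indicator (fun _ => (1 : ℝ)) | m]) :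
    r =ᵐ[P] P[r | m] := by
  have hri : Integrable r P := by
    subst hQ; exact aux_integrable P r hr hr0
  refine Integrable.ae_eq_of_forall_setIntegral_eq _ _ hri integrable_condExp ?_
  intro E hE _
  set c := P[E.indicator (fun _ => (1 : ℝ)) | m] with hc
  set g := P[r | m] with hg
  have hcm : StronglyMeasurable[m] c := stronglyMeasurable_condExp
  have hgm : StronglyMeasurable[m] g := stronglyMeasurable_condExp
  have hgi : Integrable g P := integrable_condExp
  have hgE : Integrable (g * E.indicator (fun _ => (1 : ℝ))) P := by
    refine (hgi.indicator hE).congr ?_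
    filter_upwards with x
    by_cases hx : x ∈ E <;> simp [hx]
  have hrc : Integrable (r * c) P :=
    hri.mul_bdd (c := 1) (hcm.mono hm).aestronglyMeasurable (aux_bdd m P E)
  have h1 := condExp_mul_of_stronglyMeasurable_left hgm hgE (aux_ind_int P hE)
  have h2 := condExp_mul_of_stronglyMeasurable_right hcm hrc hri
  have e1 : ∫ x in E, g x ∂P = ∫ x, g x * c x ∂P := by
    calc ∫ x in E, g x ∂P = ∫ x, (g * E.indicator (fun _ => (1 : ℝ))) x ∂P := by
          rw [← integral_indicator hE]
          congr 1; ext x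
          by_cases hx : x ∈ E <;> simp [hx]
      _ = _ := by
          rw [← integral_condExp hm]
          exact integral_congr_ae h1
  have e2 : ∫ x in E, r x ∂P = ∫ x, r x * c x ∂P := by
    calc ∫ x in E, r x ∂P = ∫ x in E, (1 : ℝ) ∂Q := by
          rw [hQ, aux_integral_wd P r hr hr0 _ E hE]; simp
      _ = ∫ x, E.indicator (fun _ => (1 : ℝ)) x ∂Q := by rw [integral_indicator hE]
      _ = ∫ x, c x ∂Q := by
          rw [← integral_condExp hm]
          exact integral_congr_ae (hS E hE)
      _ = _ := by
          rw [hQ, ← setIntegral_univ, aux_integral_wd P r hr hr0 _ _ MeasurableSet.univ,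
            setIntegral_univ]
  rw [e1, e2]
  calc ∫ x, r x * c x ∂P = ∫ x, (P[r * c | m]) x ∂P := (integral_condExp hm).symm
    _ = _ := integral_congr_ae h2

lemma aux_factor {Y : Type*} {mY : MeasurableSpace Y} (S : X → Y) (g : X → ℝ)
    (hg : StronglyMeasurable[MeasurableSpace.comap S mY] g) :
    ∃ G : Y → ℝ, Measurable G ∧ g = G ∘ S := by
  obtain ⟨G, hG, h⟩ := hg.measurable.exists_eq_measurable_comp
  exact ⟨G, hG, h⟩

lemma aux_span {Θ : Type*} (k : ℕ) (v : Θ → Fin k → ℝ)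
    (hv : ∀ a : Fin k → ℝ, (∀ θ, ∑ i, a i * v θ i = 0) → a = 0) :
    Submodule.span ℝ (Set.range v) = ⊤ := by
  by_contra hne
  obtain ⟨φ, hφ, hle⟩ := Submodule.exists_le_ker_of_lt_top _ (lt_top_iff_ne_top.2 hne)
  apply hφ
  have key : ∀ x : Fin k → ℝ, φ x = ∑ i, φ (Pi.single i 1) * x i := by
    intro x
    conv_lhs => rw [← Finset.univ_sum_single x, map_sum]
    refine Finset.sum_congr rfl fun i _ => ?_
    rw [show (Pi.single i (x i) : Fin k → ℝ) = x i • Pi.single i 1 by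
      rw [← Pi.single_smul]; simp, map_smul, smul_eq_mul, mul_comm]
  have := hv (fun i => φ (Pi.single i 1)) fun θ => by
    rw [← key]
    exact hle (Submodule.subset_span ⟨θ, rfl⟩)
  ext i
  simpa using congrFun this i

end Helpers

/-- Method 3.3 (exponential families). -/
theorem method_3_3
    {X : Type u} [mX : MeasurableSpace X] {Θ : Type v} [Nonempty Θ]
    (P : Θ → Measure X) (hP : ∀ θ, IsProbabilityMeasure (P θ))
    (μ : Measure X) (hμ : SigmaFinite μ) (hac : ∀ θ, P θ ≪ μ)
    (hX : IsAnalyticBorel X)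
    (f : Θ → X → ℝ) (hf : ∀ θ, IsDensity (P θ) μ (f θ))
    (k : ℕ) (η : Fin k → Θ → ℝ) (B : Θ → ℝ)
    (Ts : Fin k → X → ℝ) (hTs : ∀ i, Measurable (Ts i))
    (h : X → ℝ) (hh : Measurable h)
    (hform : ∀ θ : Θ, ∀ᵐ x ∂μ,
      f θ x = Real.exp ((∑ i, η i θ * Ts i x) - B θ) * h x)
    (hindep : ∀ (a₀ : ℝ) (a : Fin k → ℝ),
      (∀ θ : Θ, (∑ i, a i * η i θ) = a₀) → a₀ = 0 ∧ ∀ i, a i = 0) :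
    IsMinimalSufficientStat P (fun x => (fun i => Ts i x : Fin k → ℝ)) := by
  have _ := hac
  have _ := hX
  obtain ⟨θ₀⟩ := ‹Nonempty Θ›
  let q : Θ → (Fin k → ℝ) → ℝ := fun θ t =>
    Real.exp ((∑ i, (η i θ - η i θ₀) * t i) - (B θ - B θ₀))
  have hq : ∀ θ, Measurable (q θ) := fun θ => by
    refine Real.measurable_exp.comp ?_
    refine Measurable.sub_const ?_ _
    exact Finset.measurable_sum _ fun i _ => (measurable_pi_apply i).const_mul _
  let T : X → Fin k → ℝ := fun x i => Ts i x
  have hT : Measurable T := measurable_pi_lambda _ hTs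
  have hr : ∀ θ, Measurable (fun x => q θ (T x)) := fun θ => (hq θ).comp hT
  have hr0 : ∀ θ x, 0 ≤ q θ (T x) := fun θ x => (Real.exp_pos _).le
  have hdens : ∀ θ, P θ = (P θ₀).withDensity (fun x => ENNReal.ofReal (q θ (T x))) := by
    intro θ
    rw [(hf θ).2.2, (hf θ₀).2.2, ← withDensity_mul _ (hf θ₀).1.ennreal_ofReal
      (hr θ).ennreal_ofReal]
    refine withDensity_congr_ae ?_
    filter_upwards [hform θ, hform θ₀] with x h1 h2
    rw [Pi.mul_apply, ← ENNReal.ofReal_mul ((hf θ₀).2.1 x), h1, h2]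
    congr 1
    have : Real.exp ((∑ i, η i θ * Ts i x) - B θ)
        = Real.exp ((∑ i, η i θ₀ * Ts i x) - B θ₀) * q θ (T x) := by
      rw [← Real.exp_add]
      congr 1
      simp only [T, sub_mul, Finset.sum_sub_distrib]
      ring
    rw [this]; ring
  have hac0 : ∀ θ, P θ ≪ P θ₀ := fun θ => by
    rw [hdens θ]; exact withDensity_absolutelyContinuous _ _
  change IsMinimalSufficientStat P T
  refine ⟨⟨hT, ?_⟩, ?_⟩
  · intro E hE
    obtain ⟨κ, hκ, hκe⟩ := aux_factor T
      ((P θ₀)[E.indicator (fun _ => (1 : ℝ)) | MeasurableSpace.comap T inferInstance])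
      stronglyMeasurable_condExp
    refine ⟨κ, hκ, fun θ => ?_⟩
    rw [← hκe]
    refine aux_suff _ (P θ₀) (fun x => q θ (T x)) (hr θ) (hr0 θ) (P θ) (hdens θ)
      hT.comap_le ?_ E hE
    exact ((hq θ).comp (comap_measurable T)).stronglyMeasurable
  · intro S' mS S hS
    have hm : MeasurableSpace.comap S mS ≤ mX := hS.1.comap_le
    have hG : ∀ θ, ∃ G : S' → ℝ, Measurable G ∧ (fun x => q θ (T x)) =ᵐ[P θ₀] G ∘ S := by
      intro θ
      obtain ⟨G, hG, hGe⟩ := aux_factor S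
        ((P θ₀)[fun x => q θ (T x) | MeasurableSpace.comap S mS]) stronglyMeasurable_condExp
      refine ⟨G, hG, ?_⟩
      rw [← hGe]
      refine aux_min _ (P θ₀) _ (hr θ) (hr0 θ) (P θ) (hdens θ) hm ?_
      intro E hE
      obtain ⟨κ, _, hκ⟩ := hS.2 E hE
      exact (hκ θ).trans ((hac0 θ).ae_eq (hκ θ₀)).symm
    choose G hGm hGe using hG
    have hspan := aux_span k (fun θ i => η i θ - η i θ₀) (by
      intro a ha
      have := (hindep (∑ i, a i * η i θ₀) a (fun θ => by
        have := ha θ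
        simp only [mul_sub, Finset.sum_sub_distrib] at this
        linarith)).2
      exact funext this)
    have hc : ∀ i : Fin k, ∃ c : Θ →₀ ℝ,
        (c.sum fun θ a => a • (fun i => η i θ - η i θ₀ : Fin k → ℝ)) = Pi.single i 1 := by
      intro i
      rw [← Finsupp.mem_span_range_iff_exists_finsupp, hspan]
      trivial
    choose c hc using hc
    refine ⟨fun s i => ∑ θ ∈ (c i).support, c i θ * (Real.log (G θ s) + (B θ - B θ₀)), ?_, ?_⟩
    · refine measurable_pi_lambda _ fun i => ?_
      refine Finset.measurable_sum _ fun θ _ => ?_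
      exact ((Real.measurable_log.comp (hGm θ)).add_const _).const_mul _
    · intro θ'
      refine (hac0 θ').ae_le ?_
      have hall : ∀ᵐ x ∂(P θ₀), ∀ i : Fin k, ∀ θ ∈ (c i).support, q θ (T x) = G θ (S x) := by
        rw [ae_all_iff]
        intro i
        rw [Filter.eventually_all_finset]
        intro θ _
        exact hGe θ
      filter_upwards [hall] with x hx
      funext i
      have h1 : T x i = ∑ j, (Pi.single i 1 : Fin k → ℝ) j * T x j := by
        simp [Pi.single_apply]
      rw [h1, ← hc i]
      simp only [Function.comp, Finsupp.sum, Finset.sum_apply, Pi.smul_apply, smul_eq_mul,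
        Finset.sum_mul]
      rw [Finset.sum_comm]
      refine Finset.sum_congr rfl fun θ hθ => ?_
      rw [← hx i θ hθ]
      simp only [q, Real.log_exp, sub_add_cancel, Finset.mul_sum, mul_assoc]
end
end

section
/- Proposition 4.2. Let ℰ = (𝒳, Σ, {P_θ}_{θ∈Θ}) be a statistical model and μ a σ-finite measure on (𝒳,Σ). If ℰ ≪ μ, then there exists a countable subset {θ_n}_{n∈ℕ} ⊆ Θ such that for every sequence (c_n)_{n∈ℕ} of strictly positive reals with Σ_{n∈ℕ} c_n = 1, the set function P : Σ → ℝ given by P := Σ_{n∈ℕ} c_n·P_{θ_n} is a probability measure satisfying ℰ ≡ P, P ≪ μ, and dP/dμ = Σ_{n∈ℕ} c_n·(dP_{θ_n}/dμ) μ-a.e. -/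
open MeasureTheory

noncomputable section

universe u v w u'

open MeasureTheory

theorem exists_max_seq {X : Type u} [MeasurableSpace X] {Θ : Type v} [Nonempty Θ]
    (ν : Measure X) [IsFiniteMeasure ν] (S : Θ → Set X) (hS : ∀ θ, MeasurableSet (S θ)) :
    ∃ t : ℕ → Θ, ∀ θ, ν (S θ \ ⋃ n, S (t n)) = 0 := by
  let g : (ℕ → Θ) → ENNReal := fun t => ν (⋃ n, S (t n))
  obtain ⟨u, -, hu, hur⟩ := exists_seq_tendsto_sSup (Set.range_nonempty g)
    (OrderTop.bddAbove _)
  choose q hq using hur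
  let t : ℕ → Θ := fun n => q n.unpair.1 n.unpair.2
  have hle : ∀ k, u k ≤ g t := by
    intro k
    rw [← hq k]
    apply measure_mono
    intro x hx
    obtain ⟨m, hm⟩ := Set.mem_iUnion.1 hx
    refine Set.mem_iUnion.2 ⟨Nat.pair k m, ?_⟩
    simpa [t] using hm
  have hsup : sSup (Set.range g) ≤ g t := le_of_tendsto' hu hle
  refine ⟨t, fun θ => ?_⟩
  let t' : ℕ → Θ := fun n => Nat.casesOn n θ t
  have h1 : g t' ≤ g t := (le_sSup (Set.mem_range_self t')).trans hsup
  have hsub : (S θ \ ⋃ n, S (t n)) ∪ (⋃ n, S (t n)) ⊆ ⋃ n, S (t' n) := by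
    rintro x (hx | hx)
    · exact Set.mem_iUnion.2 ⟨0, hx.1⟩
    · obtain ⟨m, hm⟩ := Set.mem_iUnion.1 hx
      exact Set.mem_iUnion.2 ⟨m + 1, hm⟩
  have h2 := (measure_mono (μ := ν) hsub).trans h1
  rw [measure_union Set.disjoint_sdiff_left (MeasurableSet.iUnion fun n => hS _)] at h2
  have h3 : ν (S θ \ ⋃ n, S (t n)) + ν (⋃ n, S (t n)) ≤ 0 + ν (⋃ n, S (t n)) := by
    simpa using h2
  exact le_antisymm ((ENNReal.add_le_add_iff_right (measure_ne_top _ _)).1 h3) zero_le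

/-- Proposition 4.2. -/
theorem prop_4_2
    {X : Type u} [mX : MeasurableSpace X] {Θ : Type v} [Nonempty Θ]
    (P : Θ → Measure X) (hP : ∀ θ, IsProbabilityMeasure (P θ))
    (μ : Measure X) (hμ : SigmaFinite μ) (hac : ∀ θ, P θ ≪ μ) :
    ∃ θseq : ℕ → Θ, ∀ c : ℕ → ℝ, (∀ n, 0 < c n) → (∑' n, c n) = 1 →
      IsProbabilityMeasure (Measure.sum fun n => ENNReal.ofReal (c n) • P (θseq n)) ∧
      (∀ s : Set X, MeasurableSet s →
        ((Measure.sum fun n => ENNReal.ofReal (c n) • P (θseq n)) s = 0 ↔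
          ∀ θ : Θ, P θ s = 0)) ∧
      (Measure.sum fun n => ENNReal.ofReal (c n) • P (θseq n)) ≪ μ ∧
      (Measure.sum fun n => ENNReal.ofReal (c n) • P (θseq n)).rnDeriv μ =ᵐ[μ]
        fun x => ∑' n, ENNReal.ofReal (c n) * (P (θseq n)).rnDeriv μ x := by
  have hm : ∀ θ, Measurable ((P θ).rnDeriv μ) := fun θ => Measure.measurable_rnDeriv _ _
  have hd : ∀ θ, μ.withDensity ((P θ).rnDeriv μ) = P θ :=
    fun θ => Measure.withDensity_rnDeriv_eq _ _ (hac θ)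
  have hnull : ∀ θ (s : Set X), P θ s = 0 ↔ μ ({x | (P θ).rnDeriv μ x ≠ 0} ∩ s) = 0 := by
    intro θ s
    conv_lhs => rw [← hd θ]
    exact withDensity_apply_eq_zero (hm θ)
  obtain ⟨t, ht⟩ := exists_max_seq μ.toFinite (fun θ => {x | (P θ).rnDeriv μ x ≠ 0})
    (fun θ => (hm θ) (measurableSet_singleton 0).compl)
  have ht' : ∀ θ, μ ({x | (P θ).rnDeriv μ x ≠ 0} \ ⋃ n, {x | (P (t n)).rnDeriv μ x ≠ 0}) = 0 :=
    fun θ => absolutelyContinuous_toFinite μ (ht θ)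
  refine ⟨t, fun c hc hsum => ?_⟩
  have hsm : Summable c := by
    by_contra h
    rw [tsum_eq_zero_of_not_summable h] at hsum
    exact zero_ne_one hsum
  have hzero : ∀ s : Set X, MeasurableSet s →
      ((Measure.sum fun n => ENNReal.ofReal (c n) • P (t n)) s = 0 ↔ ∀ n, P (t n) s = 0) := by
    intro s hs
    rw [Measure.sum_apply _ hs, ENNReal.tsum_eq_zero]
    refine forall_congr' fun n => ?_
    simp [hc n, not_le.2 (hc n)]
  have hprob : IsProbabilityMeasure (Measure.sum fun n => ENNReal.ofReal (c n) • P (t n)) := by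
    constructor
    rw [Measure.sum_apply _ MeasurableSet.univ]
    simp only [Measure.smul_apply, measure_univ, smul_eq_mul, mul_one]
    rw [← ENNReal.ofReal_tsum_of_nonneg (fun n => (hc n).le) hsm, hsum, ENNReal.ofReal_one]
  have hden : (Measure.sum fun n => ENNReal.ofReal (c n) • P (t n)) =
      μ.withDensity (fun x => ∑' n, ENNReal.ofReal (c n) * (P (t n)).rnDeriv μ x) := by
    have h := withDensity_tsum (μ := μ)
      (f := fun n x => ENNReal.ofReal (c n) * (P (t n)).rnDeriv μ x)
      (fun n => (hm _).const_mul _)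
    have h2 : (∑' n, fun x => ENNReal.ofReal (c n) * (P (t n)).rnDeriv μ x) =
        fun x => ∑' n, ENNReal.ofReal (c n) * (P (t n)).rnDeriv μ x := by
      funext x
      exact tsum_apply (Pi.summable.2 fun _ => ENNReal.summable)
    rw [← h2, h]
    congr 1
    funext n
    conv_lhs => rw [← hd (t n)]
    exact (withDensity_smul _ (hm _)).symm
  refine ⟨hprob, fun s hs => ?_, ?_, ?_⟩
  · rw [hzero s hs]
    refine ⟨fun h θ => ?_, fun h n => h _⟩
    rw [hnull]
    have h1 : μ (⋃ n, ({x | (P (t n)).rnDeriv μ x ≠ 0} ∩ s)) = 0 :=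
      measure_iUnion_null fun n => (hnull _ _).1 (h n)
    refine measure_mono_null ?_ (measure_union_null (ht' θ) h1)
    rintro x ⟨hx, hxs⟩
    by_cases hU : x ∈ ⋃ n, {x | (P (t n)).rnDeriv μ x ≠ 0}
    · right
      obtain ⟨n, hn⟩ := Set.mem_iUnion.1 hU
      exact Set.mem_iUnion.2 ⟨n, hn, hxs⟩
    · exact Or.inl ⟨hx, hU⟩
  · rw [hden]
    exact withDensity_absolutelyContinuous _ _
  · rw [hden]
    exact Measure.rnDeriv_withDensity μ (Measurable.ennreal_tsum fun n => (hm _).const_mul _)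
end
end

section
/- Proposition 4.5. Let ℰ = (𝒳, Σ, {P_θ}_{θ∈Θ}) be a statistical model and T : 𝒳 → (𝒯,Σ_𝒯) a measurable function with (𝒯,Σ_𝒯) a standard Borel space. If the sub-σ-algebra σ(T) = T⁻¹(Σ_𝒯) is a minimal sufficient σ-algebra, then T is a minimal sufficient statistic. -/
open MeasureTheory

noncomputable section

universe u v w u'

theorem exists_preimage_of_completionAlg {X : Type u} [mX : MeasurableSpace X] {Θ : Type v}
    (P : Θ → Measure X) {S' : Type u'} [mS : MeasurableSpace S'] (S : X → S') (A : Set X)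
    (hA : MeasurableSet[completionAlg P (MeasurableSpace.comap S mS)] A) :
    ∃ B : Set S', MeasurableSet B ∧ ∀ θ, ∀ᵐ x ∂(P θ), (x ∈ A ↔ S x ∈ B) := by
  induction A, hA using MeasurableSpace.generateFrom_induction with
  | hC t ht _ =>
    rcases ht with ht | ht
    · obtain ⟨B, hB, rfl⟩ := ht
      exact ⟨B, hB, fun θ => Filter.Eventually.of_forall fun x => Iff.rfl⟩
    · refine ⟨∅, MeasurableSet.empty, fun θ => ?_⟩
      have h0 : P θ t = 0 := ht.2 θ
      filter_upwards [measure_eq_zero_iff_ae_notMem.1 h0] with x hx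
      simp [hx]
  | empty => exact ⟨∅, MeasurableSet.empty, fun θ => Filter.Eventually.of_forall fun x => by simp⟩
  | compl t _ ih =>
    obtain ⟨B, hB, h⟩ := ih
    refine ⟨Bᶜ, hB.compl, fun θ => ?_⟩
    filter_upwards [h θ] with x hx
    simp [hx]
  | iUnion f _ ih =>
    choose B hB h using ih
    refine ⟨⋃ n, B n, MeasurableSet.iUnion hB, fun θ => ?_⟩
    filter_upwards [ae_all_iff.2 fun n => h n θ] with x hx
    simp [hx]

/-- Proposition 4.5. -/
theorem prop_4_5
    {X : Type u} [mX : MeasurableSpace X] {Θ : Type v} [Nonempty Θ]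
    (P : Θ → Measure X) (hP : ∀ θ, IsProbabilityMeasure (P θ))
    {T' : Type w} [mT : MeasurableSpace T'] [StandardBorelSpace T']
    (T : X → T') (hT : Measurable T)
    (hmin : IsMinimalSufficientSubalgebra P (MeasurableSpace.comap T mT)) :
    IsMinimalSufficientStat P T := by
  obtain ⟨⟨hle, hsuff⟩, hm⟩ := hmin
  refine ⟨⟨hT, fun E hE => ?_⟩, ?_⟩
  · obtain ⟨κ, hκ, h⟩ := hsuff E hE
    obtain ⟨k, hk, rfl⟩ := hκ.exists_eq_measurable_comp
    exact ⟨k, hk, h⟩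
  · intro S' mS S hS
    have hS' : IsSufficientSubalgebra P (MeasurableSpace.comap S mS) := by
      refine ⟨hS.1.comap_le, fun E hE => ?_⟩
      obtain ⟨κ, hκ, h⟩ := hS.2 E hE
      exact ⟨κ ∘ S, hκ.comp (comap_measurable S), h⟩
    have hcomp := hm _ hS'
    obtain ⟨e, he, hinj⟩ :=
      MeasurableSpace.measurable_injection_nat_bool_of_countablySeparated T'
    have hemb : MeasurableEmbedding e := he.measurableEmbedding hinj
    have hne : Nonempty T' := by
      obtain ⟨θ⟩ := ‹Nonempty Θ›
      have := hP θ
      exact (nonempty_of_isProbabilityMeasure (P θ)).map T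
    obtain ⟨r, hr, hre⟩ := hemb.exists_measurable_extend measurable_id (fun _ => hne)
    have key : ∀ n : ℕ, ∃ B : Set S', MeasurableSet B ∧
        ∀ θ, ∀ᵐ x ∂(P θ), (x ∈ T ⁻¹' {t | e t n = true} ↔ S x ∈ B) := fun n =>
      exists_preimage_of_completionAlg P S _ (hcomp _
        ⟨_, ((measurable_pi_apply n).comp he) (measurableSet_singleton true), rfl⟩)
    choose B hB h using key
    classical
    refine ⟨fun s => r fun n => decide (s ∈ B n), hr.comp ?_, fun θ => ?_⟩
    · refine measurable_pi_lambda _ fun n => measurable_to_bool ?_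
      convert hB n using 1
      ext s
      simp
    · filter_upwards [ae_all_iff.2 fun n => h n θ] with x hx
      have h1 : (fun n => decide (S x ∈ B n)) = e (T x) := by
        funext n
        have h2 : e (T x) n = true ↔ S x ∈ B n := hx n
        rw [Bool.eq_iff_iff, h2]
        simp
      have h3 : r (e (T x)) = T x := congrFun hre (T x)
      simp only [Function.comp_apply, h1, h3]
end
end

section
/- Proposition 4.7(i). Let ℰ = (𝒳, Σ, {P_θ}_{θ∈Θ}) be a statistical model and (c_n)_{n∈ℕ} a sequence of strictly positive reals with Σ_{n∈ℕ} c_n = 1. If {θ_n}_{n∈ℕ} ⊆ Θ is dense in Θ with respect to the topology τ⟨ℰ⟩, then P : Σ → ℝ given by P := Σ_{n∈ℕ} c_n·P_{θ_n} is a probability measure satisfying ℰ ≡ P (i.e., for every E ∈ Σ, P(E) = 0 if and only if P_θ(E) = 0 for every θ ∈ Θ). -/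
open MeasureTheory

noncomputable section

universe u v w u'

/-- Proposition 4.7(i). -/
theorem prop_4_7_i
    {X : Type u} [mX : MeasurableSpace X] {Θ : Type v} [Nonempty Θ]
    (P : Θ → Measure X) (hP : ∀ θ, IsProbabilityMeasure (P θ))
    (c : ℕ → ℝ) (hc : ∀ n, 0 < c n) (hsum : (∑' n, c n) = 1)
    (θseq : ℕ → Θ) (hdense : @Dense Θ (modelTopology P) (Set.range θseq)) :
    IsProbabilityMeasure (Measure.sum fun n => ENNReal.ofReal (c n) • P (θseq n)) ∧
    ∀ s : Set X, MeasurableSet s →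
      ((Measure.sum fun n => ENNReal.ofReal (c n) • P (θseq n)) s = 0 ↔
        ∀ θ : Θ, P θ s = 0) := by
  have hsm : Summable c := by
    by_contra h
    rw [tsum_eq_zero_of_not_summable h] at hsum
    exact zero_ne_one hsum
  refine ⟨⟨?_⟩, ?_⟩
  · rw [Measure.sum_apply _ MeasurableSet.univ]
    have h1 : ∀ n, (ENNReal.ofReal (c n) • P (θseq n)) Set.univ = ENNReal.ofReal (c n) := by
      intro n
      have := hP (θseq n)
      simp
    simp_rw [h1]
    rw [← ENNReal.ofReal_tsum_of_nonneg (fun n => (hc n).le) hsm, hsum, ENNReal.ofReal_one]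
  · intro s hs
    rw [Measure.sum_apply _ hs, ENNReal.tsum_eq_zero]
    constructor
    · intro h θ
      have h0 : ∀ n, P (θseq n) s = 0 := by
        intro n
        have h2 := h n
        rw [Measure.smul_apply, smul_eq_mul, mul_eq_zero] at h2
        rcases h2 with h2 | h2
        · exact absurd (ENNReal.ofReal_eq_zero.mp h2) (not_le.mpr (hc n))
        · exact h2
      letI : TopologicalSpace Θ := modelTopology P
      have hcont : Continuous (fun θ => (P θ s).toReal) :=
        continuous_iff_le_induced.mpr
          (iInf_le (fun E : {E : Set X // MeasurableSet E} =>
            TopologicalSpace.induced (fun θ => (P θ E.1).toReal) inferInstance) ⟨s, hs⟩)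
      have heq : (fun θ => (P θ s).toReal) = fun _ => (0 : ℝ) := by
        refine Continuous.ext_on hdense hcont continuous_const ?_
        rintro _ ⟨n, rfl⟩
        simp [h0 n]
      have := hP θ
      have h3 : (P θ s).toReal = 0 := congrFun heq θ
      exact ((ENNReal.toReal_eq_zero_iff _).mp h3).resolve_right (measure_ne_top _ _)
    · intro h n
      simp [h]
end
end

section
/- Proposition 4.7(ii). Let ℰ = (𝒳, Σ, {P_θ}_{θ∈Θ}) be a statistical model, (c_n)_{n∈ℕ} a sequence of strictly positive reals with Σ_{n∈ℕ} c_n = 1, and {θ_n}_{n∈ℕ} ⊆ Θ dense in Θ with respect to τ⟨ℰ⟩; let P := Σ_{n∈ℕ} c_n·P_{θ_n}. For each n ∈ ℕ choose a density f_{θ_n} of P_{θ_n} with respect to P. Then 𝔄 := ⋁_{n∈ℕ} σ(f_{θ_n}), the σ-algebra generated by the union of the σ-algebras generated by the functions f_{θ_n}, is a countably generated minimal sufficient sub-σ-algebra of Σ. -/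
open MeasureTheory

noncomputable section

universe u v w u'

/-! ### Auxiliary lemmas -/

theorem aux_countablyGenerated {X : Type u} (f : ℕ → X → ℝ) :
    @MeasurableSpace.CountablyGenerated X
      (⨆ n, MeasurableSpace.comap (f n) Real.measurableSpace) := by
  have h : ∀ n, ∃ b : Set (Set X), b.Countable ∧
      MeasurableSpace.comap (f n) Real.measurableSpace = MeasurableSpace.generateFrom b := by
    intro n
    exact (MeasurableSpace.CountablyGenerated.comap (f n)).isCountablyGenerated
  choose b hb hb' using h
  refine @MeasurableSpace.CountablyGenerated.mk X
    (⨆ n, MeasurableSpace.comap (f n) Real.measurableSpace)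
    ⟨⋃ n, b n, Set.countable_iUnion hb, ?_⟩
  simp_rw [hb']
  exact MeasurableSpace.iSup_generateFrom b

/-- Evaluation at a measurable set is continuous for the model topology. -/
theorem aux_continuous_eval {X : Type u} [MeasurableSpace X] {Θ : Type v} (P : Θ → Measure X)
    (E : Set X) (hE : MeasurableSet E) :
    @Continuous Θ ℝ (modelTopology P) _ (fun θ => (P θ E).toReal) := by
  exact continuous_iInf_dom (i := (⟨E, hE⟩ : {E : Set X // MeasurableSet E}))
    continuous_induced_dom

theorem aux_ext {Θ : Type v} (t : TopologicalSpace Θ) {s : Set Θ} (hs : Dense s) {F G : Θ → ℝ}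
    (hF : Continuous F) (hG : Continuous G) (h : Set.EqOn F G s) : F = G :=
  Continuous.ext_on hs hF hG h

theorem aux_integrable_s10 {X : Type u} [MeasurableSpace X] (μ : Measure X) [IsFiniteMeasure μ]
    (k : X → ℝ) (hk : Measurable k) (h0 : ∀ x, 0 ≤ k x) (h1 : ∀ x, k x ≤ 1) :
    Integrable k μ := by
  refine Integrable.of_bound hk.aestronglyMeasurable 1 (Filter.Eventually.of_forall fun x => ?_)
  rw [Real.norm_eq_abs, abs_of_nonneg (h0 x)]
  exact h1 x

/-- Integration of a bounded measurable function is continuous for the model topology. -/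
theorem aux_continuous_integral {X : Type u} [MeasurableSpace X] {Θ : Type v} (P : Θ → Measure X)
    (hP : ∀ θ, IsProbabilityMeasure (P θ))
    (k : X → ℝ) (hk : Measurable k) (h0 : ∀ x, 0 ≤ k x) (h1 : ∀ x, k x ≤ 1) :
    @Continuous Θ ℝ (modelTopology P) _ (fun θ => ∫ x, k x ∂(P θ)) := by
  letI : TopologicalSpace Θ := modelTopology P
  refine continuous_of_uniform_approx_of_continuous fun u hu => ?_
  obtain ⟨ε, hε, hεu⟩ := Metric.mem_uniformity_dist.1 hu
  obtain ⟨N, hN⟩ := exists_nat_one_div_lt hε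
  set M : ℝ := (N : ℝ) + 1 with hM
  have hMpos : 0 < M := by positivity
  have hmeas : Measurable (fun x => ((⌊M * k x⌋₊ : ℕ) : ℝ) / M) := by fun_prop
  have hfin : (Set.range (fun x => ((⌊M * k x⌋₊ : ℕ) : ℝ) / M)).Finite := by
    refine ((Set.finite_Iic (N + 1)).image (fun n : ℕ => (n : ℝ) / M)).subset ?_
    rintro _ ⟨x, rfl⟩
    refine ⟨⌊M * k x⌋₊, ?_, rfl⟩
    refine Nat.floor_le_of_le ?_
    push_cast
    nlinarith [h1 x]
  let s : SimpleFunc X ℝ := ⟨fun x => ((⌊M * k x⌋₊ : ℕ) : ℝ) / M,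
    fun y => hmeas (measurableSet_singleton y), hfin⟩
  have hle : ∀ x, s x ≤ k x := by
    intro x
    change ((⌊M * k x⌋₊ : ℕ) : ℝ) / M ≤ k x
    rw [div_le_iff₀ hMpos, mul_comm (k x)]
    exact Nat.floor_le (mul_nonneg hMpos.le (h0 x))
  have hge : ∀ x, k x ≤ s x + 1 / M := by
    intro x
    change k x ≤ ((⌊M * k x⌋₊ : ℕ) : ℝ) / M + 1 / M
    rw [← add_div, le_div_iff₀ hMpos, mul_comm (k x)]
    exact (Nat.lt_floor_add_one _).le
  have hs0 : ∀ x, 0 ≤ s x := fun x => by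
    change 0 ≤ ((⌊M * k x⌋₊ : ℕ) : ℝ) / M
    positivity
  refine ⟨fun θ => ∫ x, s x ∂(P θ), ?_, fun θ => ?_⟩
  · have : (fun θ => ∫ x, s x ∂(P θ)) =
        fun θ => ∑ y ∈ s.range, (P θ (s ⁻¹' {y})).toReal • y := by
      funext θ
      rw [← SimpleFunc.integral_eq_integral, SimpleFunc.integral_eq]
      · rfl
      · exact aux_integrable_s10 _ _ s.measurable hs0 (fun x => (hle x).trans (h1 x))
    rw [this]
    refine continuous_finsetSum _ fun y _ => ?_
    exact (aux_continuous_eval P _ (s.measurableSet_fiber y)).smul continuous_const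
  · apply hεu
    have hik := aux_integrable_s10 (P θ) k hk h0 h1
    have his := aux_integrable_s10 (P θ) s s.measurable hs0 (fun x => (hle x).trans (h1 x))
    have e1 : ∫ x, s x ∂(P θ) ≤ ∫ x, k x ∂(P θ) := integral_mono his hik hle
    have e2 : ∫ x, k x ∂(P θ) ≤ ∫ x, s x ∂(P θ) + 1 / M := by
      have := integral_mono hik (his.add (integrable_const (1 / M))) hge
      rw [integral_add' his (integrable_const _)] at this
      simpa using this
    rw [Real.dist_eq, abs_of_nonneg (by linarith)]
    linarith

theorem aux_pullout {X : Type u} {m mX : MeasurableSpace X} (hm : m ≤ mX) (μ : Measure X)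
    [IsFiniteMeasure μ] (F H : X → ℝ) (hF : Measurable[m] F)
    (hH : Integrable H μ) (hFH : Integrable (F * H) μ) :
    ∫ x, F x * (μ[H|m]) x ∂μ = ∫ x, F x * H x ∂μ := by
  have h := condExp_mul_of_stronglyMeasurable_left (m := m) hF.stronglyMeasurable hFH hH
  have h2 := integral_condExp (μ := μ) hm (f := F * H)
  rw [integral_congr_ae h] at h2
  exact h2

theorem aux_density_integral {X : Type u} [MeasurableSpace X] {Q μ : Measure X} {f : X → ℝ}
    (hf : IsDensity Q μ f) (g : X → ℝ) : ∫ x, g x ∂Q = ∫ x, f x * g x ∂μ := by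
  obtain ⟨h1, h2, h3⟩ := hf
  rw [h3, integral_withDensity_eq_integral_toReal_smul h1.ennreal_ofReal
    (Filter.Eventually.of_forall fun x => ENNReal.ofReal_lt_top)]
  simp [ENNReal.toReal_ofReal (h2 _)]

theorem aux_density_integrable {X : Type u} [MeasurableSpace X] {Q μ : Measure X} {f : X → ℝ}
    (hf : IsDensity Q μ f) (g : X → ℝ) (hg : Integrable g Q) :
    Integrable (fun x => f x * g x) μ := by
  obtain ⟨h1, h2, h3⟩ := hf
  rw [h3, integrable_withDensity_iff h1.ennreal_ofReal
    (Filter.Eventually.of_forall fun x => ENNReal.ofReal_lt_top)] at hg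
  simpa [ENNReal.toReal_ofReal (h2 _), mul_comm] using hg

theorem aux_clamp_ae {X : Type u} {m mX : MeasurableSpace X} (hm : m ≤ mX) (μ : Measure X)
    [IsFiniteMeasure μ] (E : Set X) (hE : MeasurableSet[mX] E) (κ : X → ℝ)
    (h : μ[E.indicator (fun _ => (1 : ℝ)) | m] =ᵐ[μ] κ) :
    μ[E.indicator (fun _ => (1 : ℝ)) | m] =ᵐ[μ] fun x => max 0 (min 1 (κ x)) := by
  have hi : Integrable (E.indicator (fun _ => (1 : ℝ))) μ :=
    (integrable_const 1).indicator hE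
  have h0 : 0 ≤ᵐ[μ] μ[E.indicator (fun _ => (1 : ℝ)) | m] :=
    condExp_nonneg (Filter.Eventually.of_forall fun x =>
      Set.indicator_nonneg (fun _ _ => zero_le_one) x)
  have h1 : μ[E.indicator (fun _ => (1 : ℝ)) | m] ≤ᵐ[μ] μ[(fun _ => (1 : ℝ)) | m] :=
    condExp_mono hi (integrable_const 1) (Filter.Eventually.of_forall fun x =>
      Set.indicator_le_self' (fun _ _ => zero_le_one) x)
  rw [condExp_const hm] at h1
  filter_upwards [h, h0, h1] with x hx hx0 hx1
  rw [hx] at hx0 hx1 ⊢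
  rw [min_eq_right hx1]
  exact (max_eq_right hx0).symm

theorem aux_ind_mul {X : Type u} (A : Set X) (g : X → ℝ) :
    A.indicator g = fun x => A.indicator (fun _ => (1 : ℝ)) x * g x := by
  funext x
  by_cases hx : x ∈ A <;> simp [hx]

theorem aux_ind_meas {X : Type u} [MeasurableSpace X] {A : Set X} (hA : MeasurableSet A) :
    Measurable (A.indicator (fun _ => (1 : ℝ))) := measurable_const.indicator hA

theorem aux_ind_nonneg {X : Type u} (A : Set X) (x : X) :
    0 ≤ A.indicator (fun _ => (1 : ℝ)) x := Set.indicator_nonneg (fun _ _ => zero_le_one) x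

theorem aux_ind_le {X : Type u} (A : Set X) (x : X) :
    A.indicator (fun _ => (1 : ℝ)) x ≤ 1 := Set.indicator_le_self' (fun _ _ => zero_le_one) x

/-- Sufficiency. -/
theorem aux_sufficient {X : Type u} (m : MeasurableSpace X) [mX : MeasurableSpace X] {Θ : Type v}
    (P : Θ → Measure X) (hP : ∀ θ, IsProbabilityMeasure (P θ))
    (θseq : ℕ → Θ) (hdense : @Dense Θ (modelTopology P) (Set.range θseq))
    (μ : Measure X) [IsFiniteMeasure μ]
    (f : ℕ → X → ℝ) (hf : ∀ n, IsDensity (P (θseq n)) μ (f n))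
    (hmdef : m = ⨆ n, MeasurableSpace.comap (f n) Real.measurableSpace) :
    IsSufficientSubalgebra P m := by
  have hm : m ≤ mX := hmdef ▸ iSup_le fun n => (hf n).1.comap_le
  have hfm : ∀ n, Measurable[m] (f n) := fun n =>
    Measurable.mono (comap_measurable (f n))
      (hmdef ▸ le_iSup (fun n => MeasurableSpace.comap (f n) Real.measurableSpace) n) le_rfl
  refine ⟨hm, fun E hE => ?_⟩
  let κ : X → ℝ := fun x => max 0 (min 1 ((μ[E.indicator (fun _ => (1 : ℝ)) | m]) x))
  have hκm : Measurable[m] κ := by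
    have : Measurable[m] (μ[E.indicator (fun _ => (1 : ℝ)) | m]) :=
      stronglyMeasurable_condExp.measurable
    exact measurable_const.max (measurable_const.min this)
  have hκX : Measurable κ := hκm.mono hm le_rfl
  have hκ0 : ∀ x, 0 ≤ κ x := fun x => le_max_left _ _
  have hκ1 : ∀ x, κ x ≤ 1 := fun x => max_le zero_le_one (min_le_left _ _)
  have hκae : μ[E.indicator (fun _ => (1 : ℝ)) | m] =ᵐ[μ] κ :=
    aux_clamp_ae hm μ E hE _ (Filter.EventuallyEq.refl _ _)
  refine ⟨κ, hκm, fun θ => ?_⟩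
  have key : ∀ A, MeasurableSet[m] A →
      (fun θ => ∫ x, A.indicator (fun _ => (1 : ℝ)) x * κ x ∂(P θ)) =
      (fun θ => ∫ x, A.indicator (fun _ => (1 : ℝ)) x * E.indicator (fun _ => (1 : ℝ)) x ∂(P θ)) := by
    intro A hA
    have hAX := hm _ hA
    refine aux_ext (modelTopology P) hdense
      (aux_continuous_integral P hP _ ((aux_ind_meas hAX).mul hκX)
        (fun x => mul_nonneg (aux_ind_nonneg _ _) (hκ0 x))
        (fun x => mul_le_one₀ (aux_ind_le _ _) (hκ0 x) (hκ1 x)))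
      (aux_continuous_integral P hP _ ((aux_ind_meas hAX).mul (aux_ind_meas hE))
        (fun x => mul_nonneg (aux_ind_nonneg _ _) (aux_ind_nonneg _ _))
        (fun x => mul_le_one₀ (aux_ind_le _ _) (aux_ind_nonneg _ _) (aux_ind_le _ _))) ?_
    rintro _ ⟨n, rfl⟩
    simp only
    rw [aux_density_integral (hf n), aux_density_integral (hf n)]
    have hint : Integrable (fun x => f n x * (A.indicator (fun _ => (1 : ℝ)) x *
        E.indicator (fun _ => (1 : ℝ)) x)) μ :=
      aux_density_integrable (hf n) _ (aux_integrable_s10 _ _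
        ((aux_ind_meas hAX).mul (aux_ind_meas hE))
        (fun x => mul_nonneg (aux_ind_nonneg _ _) (aux_ind_nonneg _ _))
        (fun x => mul_le_one₀ (aux_ind_le _ _) (aux_ind_nonneg _ _) (aux_ind_le _ _)))
    have hF : Measurable[m] (fun x => f n x * A.indicator (fun _ => (1 : ℝ)) x) :=
      (hfm n).mul (measurable_const.indicator hA)
    have hp := aux_pullout hm μ (fun x => f n x * A.indicator (fun _ => (1 : ℝ)) x)
      (E.indicator (fun _ => (1 : ℝ))) hF ((integrable_const 1).indicator hE)
      (by
        refine hint.congr (Filter.Eventually.of_forall fun x => ?_)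
        simp [mul_assoc])
    simp only [mul_assoc] at hp
    rw [← hp]
    refine integral_congr_ae ?_
    filter_upwards [hκae] with x hx
    rw [hx]
  refine (ae_eq_condExp_of_forall_setIntegral_eq hm ((integrable_const 1).indicator hE)
    (fun s _ _ => (aux_integrable_s10 _ _ hκX hκ0 hκ1).integrableOn) (fun s hs _ => ?_)
    hκm.stronglyMeasurable.aestronglyMeasurable).symm
  have := congrFun (key s hs) θ
  rw [← integral_indicator (hm _ hs), ← integral_indicator (hm _ hs), aux_ind_mul, 
    aux_ind_mul s (E.indicator _)]
  exact this

/-- Minimality. -/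
theorem aux_minimal {X : Type u} (m : MeasurableSpace X) [mX : MeasurableSpace X] {Θ : Type v}
    (P : Θ → Measure X) (hP : ∀ θ, IsProbabilityMeasure (P θ))
    (c : ℕ → ℝ)
    (θseq : ℕ → Θ) (hdense : @Dense Θ (modelTopology P) (Set.range θseq))
    (μ : Measure X) [IsFiniteMeasure μ]
    (hμ : μ = Measure.sum fun j => ENNReal.ofReal (c j) • P (θseq j))
    (f : ℕ → X → ℝ) (hf : ∀ n, IsDensity (P (θseq n)) μ (f n))
    (hsuff : IsSufficientSubalgebra P m) :
    (⨆ n, MeasurableSpace.comap (f n) Real.measurableSpace) ≤ completionAlg P m := by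
  obtain ⟨hm, hκ⟩ := hsuff
  refine iSup_le fun n => ?_
  have hfint : Integrable (f n) μ := by
    simpa using aux_density_integrable (hf n) (fun _ => (1 : ℝ)) (integrable_const 1)
  let g : X → ℝ := μ[f n | m]
  have hgm : Measurable[m] g := stronglyMeasurable_condExp.measurable
  have hgint : Integrable g μ := integrable_condExp
  have hfg : f n =ᵐ[μ] g := by
    refine Integrable.ae_eq_of_forall_setIntegral_eq _ _ hfint hgint fun E hE _ => ?_
    obtain ⟨κ₀, hκ₀m, hκ₀⟩ := hκ E hE
    let κ : X → ℝ := fun x => max 0 (min 1 (κ₀ x))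
    have hκm : Measurable[m] κ := measurable_const.max (measurable_const.min hκ₀m)
    have hκX : Measurable κ := hκm.mono hm le_rfl
    have hκ0 : ∀ x, 0 ≤ κ x := fun x => le_max_left _ _
    have hκ1 : ∀ x, κ x ≤ 1 := fun x => max_le zero_le_one (min_le_left _ _)
    have hκθ : ∀ θ, (P θ)[E.indicator (fun _ => (1 : ℝ)) | m] =ᵐ[P θ] κ := fun θ =>
      aux_clamp_ae hm (P θ) E hE κ₀ (hκ₀ θ)
    have hset : ∀ θ, ∀ A, MeasurableSet[m] A → ∫ x in A, κ x ∂(P θ) =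
        ∫ x in A, E.indicator (fun _ => (1 : ℝ)) x ∂(P θ) := by
      intro θ A hA
      have hi : Integrable (E.indicator (fun _ => (1 : ℝ))) (P θ) :=
        (integrable_const 1).indicator hE
      rw [← setIntegral_condExp hm hi hA]
      exact (integral_congr_ae (ae_restrict_of_ae (hκθ θ))).symm
    have hiE : Integrable (E.indicator (fun _ => (1 : ℝ))) μ := (integrable_const 1).indicator hE
    have hiκ : Integrable κ μ := aux_integrable_s10 _ _ hκX hκ0 hκ1
    have hκμ : κ =ᵐ[μ] μ[E.indicator (fun _ => (1 : ℝ)) | m] := by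
      refine ae_eq_condExp_of_forall_setIntegral_eq hm hiE
        (fun s _ _ => hiκ.integrableOn) (fun A hA _ => ?_)
        hκm.stronglyMeasurable.aestronglyMeasurable
      have hAX := hm _ hA
      have i1 := hiκ.indicator hAX
      have i2 := hiE.indicator hAX
      rw [← integral_indicator hAX, ← integral_indicator hAX]
      rw [hμ] at i1 i2 ⊢
      rw [integral_sum_measure i1, integral_sum_measure i2]
      refine tsum_congr fun j => ?_
      rw [integral_smul_measure, integral_smul_measure, integral_indicator hAX,
        integral_indicator hAX, hset _ A hA]
    have ifκ : Integrable (fun x => f n x * κ x) μ :=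
      aux_density_integrable (hf n) _ (aux_integrable_s10 _ _ hκX hκ0 hκ1)
    rw [← integral_indicator hE, ← integral_indicator hE, aux_ind_mul, aux_ind_mul E g]
    calc ∫ x, E.indicator (fun _ => (1 : ℝ)) x * f n x ∂μ
        = ∫ x, f n x * E.indicator (fun _ => (1 : ℝ)) x ∂μ := by simp only [mul_comm]
      _ = ∫ x, E.indicator (fun _ => (1 : ℝ)) x ∂(P (θseq n)) :=
          (aux_density_integral (hf n) _).symm
      _ = ∫ x, κ x ∂(P (θseq n)) := by
          have := hset (θseq n) Set.univ MeasurableSet.univ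
          simpa only [Measure.restrict_univ] using this.symm
      _ = ∫ x, f n x * κ x ∂μ := aux_density_integral (hf n) _
      _ = ∫ x, κ x * f n x ∂μ := by simp only [mul_comm]
      _ = ∫ x, κ x * g x ∂μ := by
          refine (aux_pullout hm μ κ (f n) hκm hfint ?_).symm
          refine ifκ.congr (Filter.Eventually.of_forall fun x => ?_)
          simp [mul_comm]
      _ = ∫ x, g x * (μ[E.indicator (fun _ => (1 : ℝ)) | m]) x ∂μ := by
          refine integral_congr_ae ?_
          filter_upwards [hκμ] with x hx
          rw [hx, mul_comm]
      _ = ∫ x, g x * E.indicator (fun _ => (1 : ℝ)) x ∂μ := by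
          refine aux_pullout hm μ g _ hgm hiE ?_
          refine (hgint.indicator hE).congr (Filter.Eventually.of_forall fun x => ?_)
          rw [aux_ind_mul E g]
          simp [mul_comm]
      _ = ∫ x, E.indicator (fun _ => (1 : ℝ)) x * g x ∂μ := by simp only [mul_comm]
  have hgX : Measurable g := hgm.mono hm le_rfl
  let N : Set X := {x | f n x ≠ g x}
  have hNm : MeasurableSet N := (measurableSet_eq_fun (hf n).1 hgX).compl
  have hNμ : μ N = 0 := hfg
  have hNθ : ∀ θ, P θ N = 0 := by
    have : (fun θ => (P θ N).toReal) = fun _ => (0 : ℝ) := by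
      refine aux_ext (modelTopology P) hdense (aux_continuous_eval P N hNm)
        (@continuous_const Θ ℝ (modelTopology P) _ 0) ?_
      rintro _ ⟨k, rfl⟩
      have hac : P (θseq k) ≪ μ := by
        rw [(hf k).2.2]
        exact withDensity_absolutelyContinuous _ _
      simp [hac hNμ]
    intro θ
    have h := congrFun this θ
    exact (ENNReal.toReal_eq_zero_iff _).1 h |>.resolve_right (measure_ne_top _ _)
  rintro _ ⟨S, hS, rfl⟩
  have hdec : f n ⁻¹' S = (g ⁻¹' S \ N) ∪ (f n ⁻¹' S ∩ N) := by
    ext x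
    by_cases hx : f n x = g x
    · simp [N, hx]
    · simp [N, hx]
  have hb1 : MeasurableSet[completionAlg P m] (g ⁻¹' S) :=
    MeasurableSpace.measurableSet_generateFrom (Or.inl (hgm hS))
  have hb2 : MeasurableSet[completionAlg P m] N :=
    MeasurableSpace.measurableSet_generateFrom (Or.inr ⟨hNm, hNθ⟩)
  have hb3 : MeasurableSet[completionAlg P m] (f n ⁻¹' S ∩ N) :=
    MeasurableSpace.measurableSet_generateFrom (Or.inr ⟨((hf n).1 hS).inter hNm, fun θ =>
      measure_mono_null Set.inter_subset_right (hNθ θ)⟩)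
  rw [hdec]
  exact (hb1.diff hb2).union hb3

/-- Proposition 4.7(ii). -/
theorem prop_4_7_ii
    {X : Type u} [mX : MeasurableSpace X] {Θ : Type v} [Nonempty Θ]
    (P : Θ → Measure X) (hP : ∀ θ, IsProbabilityMeasure (P θ))
    (c : ℕ → ℝ) (hc : ∀ n, 0 < c n) (hsum : (∑' n, c n) = 1)
    (θseq : ℕ → Θ) (hdense : @Dense Θ (modelTopology P) (Set.range θseq))
    (f : ℕ → X → ℝ)
    (hf : ∀ n, IsDensity (P (θseq n))
      (Measure.sum fun j => ENNReal.ofReal (c j) • P (θseq j)) (f n)) :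
    @MeasurableSpace.CountablyGenerated X
      (⨆ n, MeasurableSpace.comap (f n) Real.measurableSpace) ∧
    IsMinimalSufficientSubalgebra P
      (⨆ n, MeasurableSpace.comap (f n) Real.measurableSpace) := by
  have hs : Summable c := by
    by_contra h
    rw [tsum_eq_zero_of_not_summable h] at hsum
    exact zero_ne_one hsum
  haveI : IsFiniteMeasure (Measure.sum fun j => ENNReal.ofReal (c j) • P (θseq j)) := by
    refine ⟨?_⟩
    rw [Measure.sum_apply _ MeasurableSet.univ]
    simp only [Measure.smul_apply, measure_univ, smul_eq_mul, mul_one]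
    rw [← ENNReal.ofReal_tsum_of_nonneg (fun n => (hc n).le) hs]
    exact ENNReal.ofReal_lt_top
  exact ⟨aux_countablyGenerated f, aux_sufficient _ P hP θseq hdense _ f hf rfl,
    fun m' hm' => @aux_minimal X m' mX Θ P hP c θseq hdense _ this rfl f hf hm'⟩
end
end

section
/- Proposition 4.8. Let (𝒳,Σ_𝒳), (𝒴,Σ_𝒴), (𝒵,Σ_𝒵) be measurable spaces and f : 𝒳 → 𝒴 and g : 𝒳 → 𝒵 measurable functions. Suppose (𝒳,Σ_𝒳) is an analytic Borel space and (𝒴,Σ_𝒴) is separable. If for all x, y ∈ 𝒳, f(x) = f(y) implies g(x) = g(y), then σ(g) ⊆ σ(f), i.e., g⁻¹(Σ_𝒵) ⊆ f⁻¹(Σ_𝒴). -/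
open MeasureTheory

noncomputable section

universe u v w u'

/-- Proposition 4.8. -/
theorem prop_4_8
    {X : Type u} [mX : MeasurableSpace X] {Y : Type v} [mY : MeasurableSpace Y]
    {Z : Type w} [mZ : MeasurableSpace Z]
    (f : X → Y) (g : X → Z) (hfm : Measurable f) (hgm : Measurable g)
    (hX : IsAnalyticBorel X)
    (hYcg : MeasurableSpace.CountablyGenerated Y) (hYsing : MeasurableSingletonClass Y)
    (hfg : ∀ x y : X, f x = f y → g x = g y) :
    MeasurableSpace.comap g mZ ≤ MeasurableSpace.comap f mY := by
  rintro _ ⟨B, hB, rfl⟩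
  obtain ⟨_, _, W, mW, hW, p, hp, hps⟩ := hX
  have key : (f ∘ p) ⁻¹' (f '' (g ⁻¹' B)) = p ⁻¹' (g ⁻¹' B) := by
    ext w
    constructor
    · rintro ⟨x, hx, hxw⟩
      have h := hfg _ _ hxw
      simp only [Set.mem_preimage] at hx ⊢
      rwa [← h]
    · intro hw
      exact ⟨p w, hw, rfl⟩
  have hm : MeasurableSet ((f ∘ p) ⁻¹' (f '' (g ⁻¹' B))) := by
    rw [key]
    exact hp (hgm hB)
  rw [(hfm.comp hp).measurableSet_preimage_iff_preimage_val] at hm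
  obtain ⟨t, ht, hts⟩ := hm
  refine ⟨t, ht, ?_⟩
  ext x
  obtain ⟨w, rfl⟩ := hps x
  have h1 : f (p w) ∈ t ↔ f (p w) ∈ f '' (g ⁻¹' B) :=
    Set.ext_iff.mp hts ⟨f (p w), w, rfl⟩
  exact h1.trans (Set.ext_iff.mp key w)
end
end

section
/- Lemma (Appendix to Corollary on a.e. factorization). Let (𝒳,Σ,ℙ) be a probability space with (𝒳,Σ) an analytic Borel space, (𝒴,Σ_𝒴) a separable measurable space, and f : 𝒳 → 𝒴 measurable. If α : 𝒴 → ℝ is injective and Σ_𝒴 = α⁻¹(ℬ_ℝ), where ℬ_ℝ is the Borel σ-algebra of ℝ, then there exists a Borel measurable function β : ℝ → 𝒴 such that β ∘ α ∘ f = f ℙ-a.e. -/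
open MeasureTheory

noncomputable section

universe u v w u'

/-- Inner regularity of finite measures on the line along analytic sets (Choquet). -/
theorem exists_isCompact_subset_analytic (μ : Measure ℝ) [IsFiniteMeasure μ] (A : Set ℝ)
    (hA : AnalyticSet A) (c : ENNReal) (hc : c < μ A) :
    ∃ K : Set ℝ, IsCompact K ∧ K ⊆ A ∧ c ≤ μ K := by
  rw [AnalyticSet] at hA
  rcases hA with rfl | ⟨φ, hφ, rfl⟩
  · simp at hc
  have step : ∀ (D : Set (ℕ → ℕ)) (i : ℕ), ∃ m : ℕ,
      c < μ (φ '' D) → c < μ (φ '' (D ∩ {x | x i ≤ m})) := by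
    intro D i
    by_cases h : c < μ (φ '' D)
    · have hU : φ '' D = ⋃ m : ℕ, φ '' (D ∩ {x | x i ≤ m}) := by
        rw [← Set.image_iUnion, ← Set.inter_iUnion]
        congr 1
        ext x
        simp only [Set.mem_inter_iff, Set.mem_iUnion, Set.mem_ofPred_eq]
        exact ⟨fun hx => ⟨hx, x i, le_rfl⟩, fun hx => hx.1⟩
      have hmono : Monotone (fun m : ℕ => φ '' (D ∩ {x | x i ≤ m})) := by
        intro a b hab
        apply Set.image_mono
        rintro x ⟨hx, hx'⟩
        exact ⟨hx, le_trans hx' hab⟩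
      rw [hU, hmono.measure_iUnion, lt_iSup_iff] at h
      obtain ⟨m, hm⟩ := h
      exact ⟨m, fun _ => hm⟩
    · exact ⟨0, fun h' => absurd h' h⟩
  choose m hm using step
  let D : ℕ → Set (ℕ → ℕ) := fun n =>
    Nat.rec Set.univ (fun n D => D ∩ {x | x n ≤ m D n}) n
  let k : ℕ → ℕ := fun n => m (D n) n
  have hDs : ∀ n, D (n + 1) = D n ∩ {x | x n ≤ k n} := fun n => rfl
  have hDc : ∀ n, c < μ (φ '' D n) := by
    intro n
    induction n with
    | zero =>
      change c < μ (φ '' Set.univ)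
      rwa [Set.image_univ]
    | succ n ih => exact hm _ _ ih
  have hDk : ∀ n x, x ∈ D n ↔ ∀ i < n, x i ≤ k i := by
    intro n
    induction n with
    | zero =>
      intro x
      change x ∈ Set.univ ↔ _
      simp
    | succ n ih =>
      intro x
      rw [hDs, Set.mem_inter_iff, ih, Set.mem_ofPred_eq]
      constructor
      · rintro ⟨h1, h2⟩ i hi
        rcases Nat.lt_succ_iff_lt_or_eq.1 hi with h | rfl
        · exact h1 i h
        · exact h2
      · intro h
        exact ⟨fun i hi => h i (by omega), h n (by omega)⟩
  let C : Set (ℕ → ℕ) := Set.univ.pi fun i => Set.Iic (k i)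
  have hC : IsCompact C := isCompact_univ_pi fun i => (Set.finite_Iic (k i)).isCompact
  refine ⟨φ '' C, hC.image hφ, Set.image_subset_range _ _, ?_⟩
  rw [Set.measure_eq_iInf_isOpen]
  refine le_iInf₂ fun U hU => le_iInf fun hUo => ?_
  have key : ∃ n, D n ⊆ φ ⁻¹' U := by
    by_contra hne
    simp only [not_exists, Set.not_subset] at hne
    choose x hx hxU using hne
    have hy : ∀ n, (fun i => min (x n i) (k i)) ∈ C := by
      intro n i _
      exact min_le_right (x n i) (k i)
    obtain ⟨y, hyC, σ, hσ, hlim⟩ := hC.tendsto_subseq hy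
    have hxl : Filter.Tendsto (fun n => x (σ n)) Filter.atTop (nhds y) := by
      rw [tendsto_pi_nhds] at hlim ⊢
      intro i
      refine (hlim i).congr' ?_
      filter_upwards [Filter.eventually_gt_atTop i] with n hn
      exact min_eq_left ((hDk _ _).1 (hx (σ n)) i (lt_of_lt_of_le hn (hσ.id_le n)))
    have hyU : y ∈ φ ⁻¹' U := hU ⟨y, hyC, rfl⟩
    have := hxl.eventually ((hUo.preimage hφ).mem_nhds hyU)
    obtain ⟨n, hn⟩ := this.exists
    exact hxU _ hn
  obtain ⟨n, hn⟩ := key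
  exact (hDc n).le.trans (measure_mono (Set.image_subset_iff.2 hn))

/-- Lemma (appendix to the a.e. factorization corollary). -/
theorem lemma_ae_section
    {X : Type u} [mX : MeasurableSpace X] (ℙ : Measure X)
    (hprob : IsProbabilityMeasure ℙ) (hX : IsAnalyticBorel X)
    {Y : Type v} [mY : MeasurableSpace Y]
    (hYcg : MeasurableSpace.CountablyGenerated Y) (hYsing : MeasurableSingletonClass Y)
    (f : X → Y) (hf : Measurable f)
    (α : Y → ℝ) (hα : Function.Injective α)
    (hcomap : mY = MeasurableSpace.comap α Real.measurableSpace) :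
    ∃ β : ℝ → Y, Measurable β ∧ (fun x => β (α (f x))) =ᵐ[ℙ] f := by
  subst hcomap
  obtain ⟨-, -, Z, mZ, hZ, g, hg, hgs⟩ := hX
  have hαm : @Measurable Y ℝ (MeasurableSpace.comap α Real.measurableSpace) _ α :=
    comap_measurable α
  have hαf : Measurable (fun x => α (f x)) := hαm.comp hf
  have hA : AnalyticSet (Set.range fun x => α (f x)) := by
    have h := MeasurableSet.univ.analyticSet_image (hαf.comp hg)
    rwa [Set.image_univ, hgs.range_comp] at h
  set A : Set ℝ := Set.range fun x => α (f x) with hAdef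
  have : IsProbabilityMeasure (ℙ.map fun x => α (f x)) :=
    Measure.isProbabilityMeasure_map hαf.aemeasurable
  have hA1 : 1 ≤ (ℙ.map fun x => α (f x)) A := by
    refine le_trans ?_ (Measure.le_map_apply hαf.aemeasurable A)
    rw [hAdef, Set.preimage_range, measure_univ]
  obtain ⟨u, -, hu, hul⟩ := exists_seq_strictMono_tendsto' (zero_lt_one (α := ENNReal))
  choose K hK hKA hKu using fun n => exists_isCompact_subset_analytic _ A hA (u n)
    ((hu n).2.trans_le hA1)
  let B : Set ℝ := ⋃ n, K n
  have hB : MeasurableSet B := MeasurableSet.iUnion fun n => (hK n).measurableSet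
  have hBA : B ⊆ A := Set.iUnion_subset hKA
  have hB1 : (ℙ.map fun x => α (f x)) B = 1 := by
    refine le_antisymm prob_le_one (le_of_tendsto' hul fun n => (hKu n).trans ?_)
    exact measure_mono (Set.subset_iUnion K n)
  have hae : ∀ᵐ x ∂ℙ, α (f x) ∈ B := by
    have h := (mem_ae_iff_prob_eq_one hB).2 hB1
    exact ae_of_ae_map hαf.aemeasurable h
  obtain ⟨x0⟩ : Nonempty X := nonempty_of_isProbabilityMeasure ℙ
  have : Nonempty Y := ⟨f x0⟩
  classical
  refine ⟨fun r => if r ∈ B then Function.invFun α r else f x0, ?_, ?_⟩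
  · rw [measurable_comap_iff]
    have : (α ∘ fun r => if r ∈ B then Function.invFun α r else f x0) =
        fun r => if r ∈ B then r else α (f x0) := by
      funext r
      by_cases hr : r ∈ B
      · obtain ⟨x, hx⟩ := hBA hr
        simp only [Function.comp, hr, if_true]
        exact Function.invFun_eq ⟨f x, hx⟩
      · simp [hr]
    rw [this]
    exact Measurable.ite hB measurable_id measurable_const
  · filter_upwards [hae] with x hx
    simp only [hx, if_true]
    exact Function.leftInverse_invFun hα (f x)
end
end

section
/- Corollary (a.e. Doob–Dynkin factorization for separable targets). Let (𝒳,Σ,ℙ) be a probability space with (𝒳,Σ) an analytic Borel space, and let (𝒴,Σ_𝒴) and (𝒵,Σ_𝒵) be separable measurable spaces. Suppose f : 𝒳 → 𝒴 and g : 𝒳 → 𝒵 are measurable. If for all x, y ∈ 𝒳, f(x) = f(y) implies g(x) = g(y), then there exists a measurable function h : 𝒴 → 𝒵 such that g = h ∘ f ℙ-a.e. -/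
open MeasureTheory

noncomputable section

universe u v w u'

open Set in
/-- Inner approximation of the range of a continuous map on Baire space by compact sets. -/
theorem exists_compact_subset_range {W : Type*} [TopologicalSpace W] [MeasurableSpace W]
    (ν : Measure W) [ν.OuterRegular] (F : (ℕ → ℕ) → W) (hF : Continuous F)
    (r : ENNReal) (hr : r < ν (range F)) : ∃ K ⊆ range F, IsCompact K ∧ r ≤ ν K := by
  have step : ∀ (k : ℕ) (S : Set (ℕ → ℕ)), r < ν (F '' S) →
      ∃ n : ℕ, r < ν (F '' (S ∩ {s | s k ≤ n})) := by
    intro k S hS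
    have hmono : Monotone (fun n : ℕ => F '' (S ∩ {s | s k ≤ n})) := by
      intro a b hab
      apply image_mono
      rintro s ⟨h1, h2⟩
      exact ⟨h1, le_trans (show s k ≤ a from h2) hab⟩
    have hU : F '' S = ⋃ n : ℕ, F '' (S ∩ {s | s k ≤ n}) := by
      ext w
      simp only [mem_image, mem_iUnion, mem_inter_iff, mem_ofPred_eq]
      constructor
      · rintro ⟨s, hs, rfl⟩
        exact ⟨s k, s, ⟨hs, le_rfl⟩, rfl⟩
      · rintro ⟨n, s, ⟨hs, -⟩, rfl⟩
        exact ⟨s, hs, rfl⟩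
    rw [hU, hmono.measure_iUnion] at hS
    exact lt_iSup_iff.1 hS
  choose! N hN using step
  let T : ℕ → Set (ℕ → ℕ) := fun k =>
    Nat.rec univ (fun k S => S ∩ {s | s k ≤ N k S}) k
  have hT1 : ∀ k, T (k + 1) = T k ∩ {s | s k ≤ N k (T k)} := fun k => rfl
  have hT : ∀ k, r < ν (F '' (T k)) := by
    intro k
    induction k with
    | zero => simpa [T] using hr
    | succ k ih => rw [hT1]; exact hN k _ ih
  let n : ℕ → ℕ := fun k => N k (T k)
  have hTn : ∀ k, ∀ s ∈ T k, ∀ i < k, s i ≤ n i := by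
    intro k
    induction k with
    | zero => intro s _ i hi; omega
    | succ k ih =>
      intro s hs i hi
      rw [hT1] at hs
      rcases Nat.lt_succ_iff_lt_or_eq.1 hi with h | rfl
      · exact ih s hs.1 i h
      · exact hs.2
  let C : Set (ℕ → ℕ) := Set.pi univ (fun i => Iic (n i))
  have hC : IsCompact C := isCompact_univ_pi (fun i => (finite_Iic (n i)).isCompact)
  refine ⟨F '' C, image_subset_range _ _, hC.image hF, ?_⟩
  rw [Set.measure_eq_iInf_isOpen]
  refine le_iInf fun U => le_iInf fun hCU => le_iInf fun hUo => ?_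
  let : MetricSpace (ℕ → ℕ) := PiNat.metricSpaceNatNat
  obtain ⟨δ, hδ, hsub⟩ := hC.exists_thickening_subset_open (hUo.preimage hF)
    (image_subset_iff.1 hCU)
  obtain ⟨k, hk⟩ := exists_pow_lt_of_lt_one hδ (show (1 / 2 : ℝ) < 1 by norm_num)
  refine (hT k).le.trans (measure_mono ?_)
  rintro _ ⟨s, hs, rfl⟩
  apply hsub
  rw [Metric.mem_thickening_iff]
  refine ⟨fun i => min (s i) (n i), fun i _ => Set.mem_Iic.2 (min_le_right _ _), lt_of_le_of_lt ?_ hk⟩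
  apply PiNat.mem_cylinder_iff_dist_le.1
  intro i hi
  exact (min_eq_left (hTn k s hs i hi)).symm

/-- Corollary (a.e. Doob–Dynkin factorization for separable targets). -/
theorem cor_ae_factorization
    {X : Type u} [mX : MeasurableSpace X] (ℙ : Measure X)
    (hprob : IsProbabilityMeasure ℙ) (hX : IsAnalyticBorel X)
    {Y : Type v} [mY : MeasurableSpace Y]
    (hYcg : MeasurableSpace.CountablyGenerated Y) (hYsing : MeasurableSingletonClass Y)
    {Z : Type w} [mZ : MeasurableSpace Z]
    (hZcg : MeasurableSpace.CountablyGenerated Z) (hZsing : MeasurableSingletonClass Z)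
    (f : X → Y) (hf : Measurable f) (g : X → Z) (hg : Measurable g)
    (hfg : ∀ x y : X, f x = f y → g x = g y) :
    ∃ h : Y → Z, Measurable h ∧ g =ᵐ[ℙ] h ∘ f := by
  classical
  obtain ⟨-, -, S, mS, hS, φ, hφ, hφs⟩ := hX
  obtain ⟨x₀⟩ : Nonempty X := nonempty_of_isProbabilityMeasure ℙ
  let e : Y → ℕ → Bool := MeasurableSpace.mapNatBool Y
  have he : Measurable e := MeasurableSpace.measurable_mapNatBool Y
  have hei : Function.Injective e := MeasurableSpace.injective_mapNatBool Y
  -- the pointwise factorization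
  obtain ⟨h1, hh1⟩ : ∃ h1 : Y → Z, ∀ x, h1 (f x) = g x := by
    refine ⟨fun y => if hy : ∃ x, f x = y then g hy.choose else g x₀, fun x => ?_⟩
    have hy : ∃ x', f x' = f x := ⟨x, rfl⟩
    simp only [hy, dite_true]
    exact hfg _ _ hy.choose_spec
  have hr : Set.range (f ∘ φ) = Set.range f := hφs.range_comp f
  have hm : Measurable (Set.domRestrict (Set.range (f ∘ φ)) h1) := by
    rw [← (hf.comp hφ).measurable_comp_iff_restrict]
    have : h1 ∘ (f ∘ φ) = g ∘ φ := funext fun s => hh1 (φ s)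
    rw [this]
    exact hg.comp hφ
  -- the image in Cantor space
  let ν : Measure (ℕ → Bool) := ℙ.map (e ∘ f)
  have hν : IsProbabilityMeasure ν := Measure.isProbabilityMeasure_map (he.comp hf).aemeasurable
  have hA : AnalyticSet ((e ∘ f ∘ φ) '' Set.univ) :=
    MeasurableSet.univ.analyticSet_image (he.comp (hf.comp hφ))
  have hA' : (e ∘ f ∘ φ) '' Set.univ = Set.range (e ∘ f) := by
    rw [Set.image_univ]; exact hφs.range_comp (e ∘ f)
  rw [hA', AnalyticSet] at hA
  obtain ⟨F, hF, hFr⟩ : ∃ F : (ℕ → ℕ) → ℕ → Bool, Continuous F ∧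
      Set.range F = Set.range (e ∘ f) := by
    rcases hA with h0 | h0
    · exact absurd h0 (Set.nonempty_iff_ne_empty.1 ⟨_, x₀, rfl⟩)
    · exact h0
  have hν1 : 1 ≤ ν (Set.range F) := by
    have := Measure.le_map_apply (μ := ℙ) (he.comp hf).aemeasurable (Set.range F)
    rw [hFr, Set.preimage_range, measure_univ] at this
    rw [hFr]; exact this
  obtain ⟨u, -, hu, hul⟩ := exists_seq_strictMono_tendsto' (show (0 : ENNReal) < 1 by simp)
  have hK : ∀ n : ℕ, ∃ K ⊆ Set.range F, IsCompact K ∧ u n ≤ ν K := fun n =>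
    exists_compact_subset_range ν F hF (u n) ((hu n).2.trans_le hν1)
  choose K hKs hKc hKu using hK
  have hBm : MeasurableSet (⋃ n, K n) := MeasurableSet.iUnion fun n => (hKc n).measurableSet
  have hB1 : 1 ≤ ν (⋃ n, K n) :=
    le_of_tendsto' hul fun n => (hKu n).trans (measure_mono (Set.subset_iUnion K n))
  let C : Set Y := e ⁻¹' (⋃ n, K n)
  have hCm : MeasurableSet C := he hBm
  have hCr : C ⊆ Set.range (f ∘ φ) := by
    intro y hy
    obtain ⟨n, hn⟩ := Set.mem_iUnion.1 hy
    have := hKs n hn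
    rw [hFr] at this
    obtain ⟨x, hx⟩ := this
    rw [hr]
    exact ⟨x, hei hx⟩
  have hC1 : ℙ (f ⁻¹' C) = 1 := by
    apply le_antisymm prob_le_one
    rwa [Measure.map_apply (he.comp hf) hBm] at hB1
  refine ⟨fun y => if y ∈ C then h1 y else g x₀, ?_, ?_⟩
  · intro s hs
    obtain ⟨D, hD, hDs⟩ := hm hs
    have : (fun y => if y ∈ C then h1 y else g x₀) ⁻¹' s
        = (C ∩ D) ∪ (Cᶜ ∩ {_y | g x₀ ∈ s}) := by
      ext y
      by_cases hy : y ∈ C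
      · have := Set.ext_iff.1 hDs ⟨y, hCr hy⟩
        simp only [Set.mem_preimage, Set.domRestrict_apply] at this
        simp [hy, this]
      · simp [hy]
    rw [this]
    exact (hCm.inter hD).union (hCm.compl.inter (MeasurableSet.const _))
  · have hae : ∀ᵐ x ∂ℙ, x ∈ f ⁻¹' C := (mem_ae_iff_prob_eq_one (hf hCm)).2 hC1
    filter_upwards [hae] with x hx
    have hx' : f x ∈ C := hx
    simp [hx', hh1]
end
end

section
/- Lemma 4.1. Let ℰ = (𝒳, Σ, {P_θ}_{θ∈Θ}) be a statistical model, μ a σ-finite measure on (𝒳,Σ) with P_θ ≪ μ for every θ, and T : 𝒳 → (𝒯,Σ_𝒯) measurable. Suppose (𝒳,Σ) is an analytic Borel space and (𝒯,Σ_𝒯) is separable. For each θ ∈ Θ choose a density f_θ of P_θ with respect to μ. If there exists a nonempty countable subset Θ₀ ⊆ Θ that is dense in Θ with respect to the topology τ⟨ℰ⟩ such that for all x, y ∈ 𝒳 with T(x) = T(y) one has y ∈ D(x,Θ₀), then T is sufficient. -/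
open MeasureTheory

noncomputable section

universe u v w u'

/-- Blackwell-type lemma: a measurable function on an analytic Borel space which is constant on
the fibres of `T` is measurable for the σ-algebra generated by `T`. -/
theorem measurable_comap_of_const_on_fibres {X : Type u} [mX : MeasurableSpace X]
    (hX : IsAnalyticBorel X) {T' : Type w} [mT : MeasurableSpace T']
    (hTcg : MeasurableSpace.CountablyGenerated T') (hTsing : MeasurableSingletonClass T')
    (T : X → T') (hT : Measurable T) {Z : Type*} [MeasurableSpace Z] (r : X → Z)
    (hr : Measurable r) (hconst : ∀ x y, T x = T y → r x = r y) :
    Measurable[MeasurableSpace.comap T mT] r := by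
  obtain ⟨-, -, Y, mY, hY, g, hg, hgs⟩ := hX
  intro B hB
  have hTg : Measurable (T ∘ g) := hT.comp hg
  have hpre : T ⁻¹' (T '' (r ⁻¹' B)) = r ⁻¹' B := by
    ext x
    constructor
    · rintro ⟨y, hy, hxy⟩
      have := hconst y x hxy
      simpa [← this] using hy
    · intro hx
      exact ⟨x, hx, rfl⟩
  have h1 : MeasurableSet ((T ∘ g) ⁻¹' (T '' (r ⁻¹' B))) := by
    rw [Set.preimage_comp, hpre]
    exact hg (hr hB)
  rw [hTg.measurableSet_preimage_iff_preimage_val] at h1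
  obtain ⟨S, hS, hSe⟩ := h1
  refine ⟨S, hS, ?_⟩
  rw [← hpre]
  ext x
  obtain ⟨y, rfl⟩ := hgs x
  have h2 := Set.ext_iff.1 hSe ⟨T (g y), y, rfl⟩
  exact h2

/-- Integration of a `[0,1]`-valued measurable function is continuous in the model topology. -/
theorem continuous_integral_model {X : Type u} [mX : MeasurableSpace X] {Θ : Type v}
    (P : Θ → Measure X) (hP : ∀ θ, IsProbabilityMeasure (P θ)) (g : X → ℝ)
    (hg : Measurable g) (h0 : ∀ x, 0 ≤ g x) (h1 : ∀ x, g x ≤ 1) :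
    @Continuous Θ ℝ (modelTopology P) _ (fun θ => ∫ x, g x ∂(P θ)) := by
  letI : TopologicalSpace Θ := modelTopology P
  have hset : ∀ E : Set X, MeasurableSet E → Continuous (fun θ => (P θ).real E) := by
    intro E hE
    rw [continuous_iff_le_induced]
    exact iInf_le (fun E : {E : Set X // MeasurableSet E} =>
      TopologicalSpace.induced (fun θ => (P θ E.1).toReal) inferInstance) ⟨E, hE⟩
  have hgi : ∀ θ, Integrable g (P θ) := fun θ =>
    Integrable.of_bound hg.aestronglyMeasurable 1
      (Filter.Eventually.of_forall fun x => by
        rw [Real.norm_eq_abs, abs_of_nonneg (h0 x)]; exact h1 x)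
  apply continuous_of_uniform_approx_of_continuous
  rw [Metric.uniformity_basis_dist_le.forall_iff (by
    intro s t hst h
    obtain ⟨F, hF, hF'⟩ := h
    exact ⟨F, hF, fun y => hst (hF' y)⟩)]
  intro ε hε
  obtain ⟨n, hn⟩ := exists_nat_one_div_lt hε
  have hpos : (0 : ℝ) < n + 1 := by positivity
  let s : SimpleFunc X ℝ :=
    { toFun := fun x => (⌊g x * (n + 1)⌋₊ : ℝ) / (n + 1)
      measurableSet_fiber' := by
        intro y
        have : Measurable (fun x => (⌊g x * (n + 1)⌋₊ : ℝ) / (n + 1)) := by fun_prop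
        exact this (measurableSet_singleton y)
      finite_range' := by
        refine ((Set.finite_Iic (n + 1)).image (fun k : ℕ => (k : ℝ) / (n + 1))).subset ?_
        rintro _ ⟨x, rfl⟩
        refine ⟨⌊g x * (n + 1)⌋₊, ?_, rfl⟩
        apply Nat.floor_le_of_le
        push_cast
        nlinarith [h1 x] }
  have hs : ∀ x, s x = (⌊g x * (n + 1)⌋₊ : ℝ) / (n + 1) := fun x => rfl
  have hsi : ∀ θ, Integrable s (P θ) := fun θ => SimpleFunc.integrable_of_isFiniteMeasure s
  refine ⟨fun θ => ∫ x, s x ∂(P θ), ?_, ?_⟩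
  · simp_rw [fun θ => SimpleFunc.integral_eq_sum s (hsi θ)]
    refine continuous_finsetSum _ fun y _ => ?_
    exact (hset _ (s.measurableSet_fiber y)).smul continuous_const
  · intro θ
    show dist (∫ x, g x ∂(P θ)) (∫ x, s x ∂(P θ)) ≤ ε
    rw [dist_eq_norm, ← integral_sub (hgi θ) (hsi θ)]
    have := norm_integral_le_of_norm_le_const (μ := P θ) (f := fun x => g x - s x) (C := ε)
      (Filter.Eventually.of_forall fun x => by
        rw [hs, Real.norm_eq_abs, abs_le]
        have hnn : 0 ≤ g x * (n + 1) := mul_nonneg (h0 x) hpos.le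
        have e1 := Nat.floor_le hnn
        have e2 := Nat.lt_floor_add_one (g x * (n + 1))
        have e3 : (⌊g x * (n + 1)⌋₊ : ℝ) / (n + 1) ≤ g x := by
          rw [div_le_iff₀ hpos]; exact e1
        have e4 : g x ≤ (⌊g x * (n + 1)⌋₊ : ℝ) / (n + 1) + 1 / (n + 1) := by
          rw [← add_div, le_div_iff₀ hpos]; exact e2.le
        constructor <;> linarith)
    simpa using this

/-- Lemma 4.1. -/
theorem lemma_4_1
    {X : Type u} [mX : MeasurableSpace X] {Θ : Type v} [Nonempty Θ]
    (P : Θ → Measure X) (hP : ∀ θ, IsProbabilityMeasure (P θ))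
    (μ : Measure X) (hμ : SigmaFinite μ) (hac : ∀ θ, P θ ≪ μ)
    (hX : IsAnalyticBorel X)
    {T' : Type w} [mT : MeasurableSpace T']
    (hTcg : MeasurableSpace.CountablyGenerated T')
    (hTsing : MeasurableSingletonClass T')
    (T : X → T') (hT : Measurable T)
    (f : Θ → X → ℝ) (hf : ∀ θ, IsDensity (P θ) μ (f θ))
    (Θ₀ : Set Θ) (hne : Θ₀.Nonempty) (hcount : Θ₀.Countable)
    (hdense : @Dense Θ (modelTopology P) Θ₀)
    (hD : ∀ x y : X, T x = T y → y ∈ DSet f x Θ₀) :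
    IsSufficientStat P T := by
  classical
  refine ⟨hT, fun E hE => ?_⟩
  have hm : MeasurableSpace.comap T mT ≤ mX := hT.comap_le
  obtain ⟨e, he⟩ := hcount.exists_eq_range hne
  have heΘ : ∀ n, e n ∈ Θ₀ := fun n => he ▸ Set.mem_range_self n
  -- dominating mixture
  let c : ℕ → ENNReal := fun n => (2⁻¹ : ENNReal) ^ n
  have hc0 : ∀ n, c n ≠ 0 := fun n => by simp [c]
  let F : ℕ → X → ENNReal := fun n x => ENNReal.ofReal (f (e n) x)
  have hF : ∀ n, Measurable (F n) := fun n => (hf (e n)).1.ennreal_ofReal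
  have hPF : ∀ n, P (e n) = μ.withDensity (F n) := fun n => (hf (e n)).2.2
  have hFint : ∀ n, ∫⁻ x, F n x ∂μ = 1 := fun n => by
    have h := (hP (e n)).measure_univ
    rwa [hPF n, withDensity_apply _ MeasurableSet.univ, Measure.restrict_univ] at h
  let s : X → ENNReal := fun x => ∑' n, c n * F n x
  have hs : Measurable s := Measurable.tsum fun n => (hF n).const_mul _
  have hsint : ∫⁻ x, s x ∂μ ≠ ⊤ := by
    have : ∫⁻ x, s x ∂μ = ∑' n, c n := by
      rw [lintegral_tsum fun n => ((hF n).const_mul _).aemeasurable]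
      congr 1; ext n
      rw [lintegral_const_mul _ (hF n), hFint n, mul_one]
    rw [this]
    simp [c, ENNReal.tsum_geometric]
  let lam : Measure X := μ.withDensity s
  haveI : IsFiniteMeasure lam := isFiniteMeasure_withDensity hsint
  let r : ℕ → X → ENNReal := fun n x => F n x / s x
  have hr : ∀ n, Measurable (r n) := fun n => (hF n).div hs
  have hrm : ∀ n, Measurable[MeasurableSpace.comap T mT] (r n) := by
    intro n
    refine measurable_comap_of_const_on_fibres hX hTcg hTsing T hT (r n) (hr n) ?_
    intro x y hxy
    obtain ⟨h, hpos, hh⟩ := hD x y hxy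
    have hFy : ∀ k, F k y = ENNReal.ofReal h * F k x := fun k => by
      simp only [F]
      rw [hh _ (heΘ k), mul_comm, ENNReal.ofReal_mul hpos.le]
    have hsy : s y = ENNReal.ofReal h * s x := by
      simp only [s]
      rw [← ENNReal.tsum_mul_left]
      congr 1; ext k
      rw [hFy k]; ring
    simp only [r]
    rw [hFy n, hsy, ENNReal.mul_div_mul_left _ _ (by simpa using hpos) ENNReal.ofReal_ne_top]
  have hPr : ∀ n, P (e n) = lam.withDensity (r n) := by
    intro n
    rw [hPF n, ← withDensity_mul μ hs (hr n)]
    refine withDensity_congr_ae ?_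
    filter_upwards [ae_lt_top hs hsint] with x hx
    simp only [Pi.mul_apply, r]
    by_cases h0 : s x = 0
    · have := ENNReal.tsum_eq_zero.1 h0 n
      have hFx : F n x = 0 := by simpa [hc0 n] using this
      simp [h0, hFx]
    · rw [ENNReal.mul_div_cancel h0 hx.ne]
  have hrint : ∀ n, ∫⁻ x, r n x ∂lam ≠ ⊤ := fun n => by
    have h := (hP (e n)).measure_univ
    rw [hPr n, withDensity_apply _ MeasurableSet.univ, Measure.restrict_univ] at h
    rw [h]; exact ENNReal.one_ne_top
  -- the conditional probability
  let I : X → ℝ := E.indicator (fun _ => (1 : ℝ))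
  have hIm : Measurable I := measurable_const.indicator hE
  have hI0 : ∀ x, 0 ≤ I x := fun x => Set.indicator_nonneg (fun _ _ => zero_le_one) x
  have hI1 : ∀ x, I x ≤ 1 := fun x => Set.indicator_le_self' (fun _ _ => zero_le_one) x
  have hIi : ∀ ν : Measure X, IsFiniteMeasure ν → Integrable I ν := fun ν _ =>
    (integrable_const (1 : ℝ)).indicator hE
  let g : X → ℝ := fun x => max 0 (min 1 ((lam[I | MeasurableSpace.comap T mT]) x))
  have hgm : Measurable[MeasurableSpace.comap T mT] g :=
    measurable_const.max (measurable_const.min stronglyMeasurable_condExp.measurable)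
  have hg0 : ∀ x, 0 ≤ g x := fun x => le_max_left _ _
  have hg1 : ∀ x, g x ≤ 1 := fun x => max_le zero_le_one (min_le_left _ _)
  have hgX : Measurable g := hgm.mono hm le_rfl
  have hglam : g =ᵐ[lam] lam[I | MeasurableSpace.comap T mT] := by
    have a0 : 0 ≤ᵐ[lam] lam[I | MeasurableSpace.comap T mT] := condExp_nonneg (Filter.Eventually.of_forall hI0)
    have a1 : lam[I | MeasurableSpace.comap T mT] ≤ᵐ[lam] lam[(fun _ => (1 : ℝ)) | MeasurableSpace.comap T mT] :=
      condExp_mono (hIi _ inferInstance) (integrable_const _) (Filter.Eventually.of_forall hI1)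
    rw [condExp_const hm] at a1
    filter_upwards [a0, a1] with x h0 h1
    simp only [g]
    rw [min_eq_right h1]; exact max_eq_right h0
  have hgi : ∀ ν : Measure X, IsFiniteMeasure ν → Integrable g ν := fun ν _ =>
    Integrable.of_bound hgX.aestronglyMeasurable 1
      (Filter.Eventually.of_forall fun x => by
        rw [Real.norm_eq_abs, abs_of_nonneg (hg0 x)]; exact hg1 x)
  obtain ⟨κ, hκ, hgκ⟩ := hgm.exists_eq_measurable_comp
  refine ⟨κ, hκ, fun θ => ?_⟩
  rw [← hgκ]
  -- equality of set integrals on the countable set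
  have key : ∀ n, ∀ A : Set X, MeasurableSet[MeasurableSpace.comap T mT] A →
      ∫ x in A, g x ∂(P (e n)) = ∫ x in A, I x ∂(P (e n)) := by
    intro n A hA
    have htop : ∀ᵐ x ∂lam.restrict A, r n x < ⊤ :=
      ae_restrict_of_ae (ae_lt_top (hr n) (hrint n))
    rw [hPr n, setIntegral_withDensity_eq_setIntegral_toReal_smul (hr n) htop g (hm _ hA),
      setIntegral_withDensity_eq_setIntegral_toReal_smul (hr n) htop I (hm _ hA)]
    let r' : X → ℝ := fun x => (r n x).toReal
    have hr'm : StronglyMeasurable[MeasurableSpace.comap T mT] r' := (hrm n).ennreal_toReal.stronglyMeasurable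
    have hr'i : Integrable r' lam :=
      integrable_toReal_of_lintegral_ne_top (hr n).aemeasurable (hrint n)
    have hprod : Integrable (r' * I) lam := by
      have := hr'i.indicator hE
      refine this.congr (Filter.Eventually.of_forall fun x => ?_)
      by_cases hx : x ∈ E <;> simp [I, hx]
    have hpull := condExp_mul_of_stronglyMeasurable_left (μ := lam) hr'm hprod
      (hIi lam inferInstance)
    calc ∫ x in A, (r n x).toReal • g x ∂lam
        = ∫ x in A, (lam[r' * I | MeasurableSpace.comap T mT]) x ∂lam := by
          refine integral_congr_ae (ae_restrict_of_ae ?_)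
          filter_upwards [hpull, hglam] with x h1 h2
          rw [h1, h2]; rfl
      _ = ∫ x in A, (r' * I) x ∂lam := setIntegral_condExp hm hprod hA
      _ = ∫ x in A, (r n x).toReal • I x ∂lam := rfl
  -- extend to all parameters by density
  have key' : ∀ A : Set X, MeasurableSet[MeasurableSpace.comap T mT] A →
      ∫ x in A, g x ∂(P θ) = ∫ x in A, I x ∂(P θ) := by
    intro A hA
    have hcont : ∀ k : X → ℝ, Measurable k → (∀ x, 0 ≤ k x) → (∀ x, k x ≤ 1) →
        @Continuous Θ ℝ (modelTopology P) _ (fun θ => ∫ x in A, k x ∂(P θ)) := by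
      intro k hk h0 h1
      have := continuous_integral_model P hP (A.indicator k) (hk.indicator (hm _ hA))
        (fun x => Set.indicator_nonneg (fun x _ => h0 x) x)
        (fun x => (Set.indicator_le_self' (fun x _ => h0 x) x).trans (h1 x))
      simpa only [integral_indicator (hm _ hA)] using this
    have heq := @Continuous.ext_on ℝ Θ _ (modelTopology P) _ _ hdense _ _ (hcont g hgX hg0 hg1) (hcont I hIm hI0 hI1) (by
      intro θ' hθ'
      rw [he] at hθ'
      obtain ⟨n, rfl⟩ := hθ'
      exact key n A hA)
    exact congrFun heq θ
  haveI := hP θ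
  exact (ae_eq_condExp_of_forall_setIntegral_eq hm (hIi (P θ) inferInstance)
    (fun A _ _ => (hgi (P θ) inferInstance).integrableOn) (fun A hA _ => key' A hA)
    hgm.stronglyMeasurable.aestronglyMeasurable).symm
end
end
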